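/- Moment differential inequality for soft potentials (integrated form). Let N ≥ 2 and s > 2. If f_in ≥ 0 belongs to L¹_s(ℝ^N) and f is a solution of the spatially homogeneous Boltzmann equation with collision kernel satisfying (H1)-(H2)-(H3), with t ↦ ‖f(t,·)‖_{L¹_s} locally bounded, then there exist constants C₁, C₂, K₀ > 0, depending only on N, γ, s, the collision kernel and the mass and energy of f_in, such that for all 0 ≤ t₀ ≤ t: ‖f(t,·)‖_{L¹_s} ≤ ‖f(t₀,·)‖_{L¹_s} + ∫_{t₀}^t ( C₁ + C₂ ‖f(τ,·)‖_{L¹_{s−2}} − K₀ ‖f(τ,·)‖_{L¹_{s+γ}} ) dτ. -/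

import Mathlib

/-!
For `p = s / 2 > 1` and the weight `br v = 1 + |v|²`, energy conservation in a collision reads
`br v' + br v'_* = br v + br v_*`. Strict convexity of `x ↦ x ^ p` makes
`(br v')^p + (br v'_*)^p` smaller than `(br v + br v_*)^p` by an amount proportional to
`1 - ⟪n, σ⟫²`, where `n` is the direction of `v + v_*`, and `(br v + br v_*)^p` exceeds
`(br v)^p + (br v_*)^p` only by cross terms (`povzner`). The angular kernel is bounded below and the
average of `1 - ⟪n, σ⟫²` over the sphere is a positive constant (`sph_sin_sq`); together with
`(1 + |v - v_*|)^γ ≥ (br v)^(γ/2) (br v_*)^(-1) / 4` (`weight_lower`) this turns the negative part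
into a multiple of the moment of order `s + γ`, while the cross terms give the moment of order
`s - 2` times mass plus energy (`povzner_int`, `kinetic`). A lower bound for
`∫ f (br v)^(-1)` through mass and energy (`exists_mom_lower`) makes the constants uniform
(`fixed_time`).

To use this the gain term has to be written in weak form (`gain_weak`), that is, the collision
transformation `(v, v_*, σ) ↦ (v', v'_*, (v - v_*)/|v - v_*|)` must preserve `dv dv_* dσ`
(`collision_change`). In centre of mass variables it exchanges the direction of the relative velocity
with `σ`. Its invariance (`swap_direction`) follows from the fact that the sphere measure, being
rotation invariant, is an average over the Haar measure of the orthogonal group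
(`lintegral_of_rot_inv`); Lebesgue measure is rotation invariant too. The angular kernel is only
assumed integrable along each direction, so it is first replaced by a Borel function
(`exists_borel_kernel`), which does not change the collision operator (`Qop_congr`).

Finally the Duhamel formula is integrated against `(br v)^(s/2)` (`time_balance`). Gain and loss are
kept apart as `[0, ∞]`-valued integrals, which are finite on bounded time intervals because the
moment of order `s` is locally bounded, so that Tonelli's theorem applies and finite terms cancel.
-/

open MeasureTheory Real RealInnerProductSpace ENNReal

noncomputable section

/-- Euclidean space `ℝ^N`. -/
abbrev Rn (N : ℕ) := EuclideanSpace ℝ (Fin N)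

/-- Surface measure on the unit sphere `S^{N-1} ⊂ ℝ^N`: the `(N-1)`-dimensional
Hausdorff measure restricted to the sphere. -/
def sphMeas (N : ℕ) : Measure (Rn N) :=
  (μH[(N : ℝ) - 1]).restrict (Metric.sphere (0 : Rn N) 1)

/-- Post-collisional velocity `v' = (v+v_*)/2 + (|v-v_*|/2) σ`. -/
def vP (N : ℕ) (v w σ : Rn N) : Rn N :=
  (2:ℝ)⁻¹ • (v + w) + (‖v - w‖ / 2) • σ

/-- Post-collisional velocity `v'_* = (v+v_*)/2 - (|v-v_*|/2) σ`. -/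
def vSP (N : ℕ) (v w σ : Rn N) : Rn N :=
  (2:ℝ)⁻¹ • (v + w) - (‖v - w‖ / 2) • σ

/-- Cosine of the deviation angle: `cos θ = σ · (v - v_*)/|v - v_*|`. -/
def cosTheta (N : ℕ) (v w σ : Rn N) : ℝ := ⟪σ, v - w⟫ / ‖v - w‖

/-- The Boltzmann collision operator `Q(g,f)` for a kernel `B = Φ(|v-v_*|) b(cos θ)`. -/
def Qop (N : ℕ) (Φ b : ℝ → ℝ) (g f : Rn N → ℝ) (v : Rn N) : ℝ :=
  ∫ w : Rn N, ∫ σ : Rn N,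
    Φ ‖v - w‖ * b (cosTheta N v w σ) *
      (g (vSP N v w σ) * f (vP N v w σ) - g w * f v) ∂(sphMeas N)

/-- Weighted norm `‖f‖_{L¹_s} = ∫ |f(v)| (1+|v|²)^{s/2} dv`, valued in `[0,∞]`. -/
def L1s (N : ℕ) (s : ℝ) (f : Rn N → ℝ) : ℝ≥0∞ :=
  ∫⁻ v : Rn N, ENNReal.ofReal (|f v| * (1 + ‖v‖ ^ 2) ^ (s / 2))

/-- Weighted norm `‖f‖_{L²_s} = (∫ |f(v)|² (1+|v|²)^s dv)^{1/2}`, valued in `[0,∞]`. -/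
def L2s (N : ℕ) (s : ℝ) (f : Rn N → ℝ) : ℝ≥0∞ :=
  (∫⁻ v : Rn N, ENNReal.ofReal (|f v| ^ 2 * (1 + ‖v‖ ^ 2) ^ s)) ^ (1/2 : ℝ)

/-- Assumptions (H1)-(H2)-(H3) on the collision kernel `B = Φ(|v-v_*|) b(cos θ)`. -/
structure KernelOK (N : ℕ) (Φ b : ℝ → ℝ) (γ : ℝ) : Prop where
  gamma_mem : γ ∈ Set.Ioc (-2 : ℝ) 0
  phi_smooth : ContDiff ℝ (⊤ : ℕ∞) Φ
  phi_bounds : ∃ cΦ CΦ : ℝ, 0 < cΦ ∧ 0 < CΦ ∧ ∀ z : Rn N,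
    cΦ * (1 + ‖z‖) ^ γ ≤ Φ ‖z‖ ∧ Φ ‖z‖ ≤ CΦ * (1 + ‖z‖) ^ γ
  phi_deriv_bounds : ∀ p : ℕ, 0 < p → ∃ C : ℝ, ∀ r : ℝ, |iteratedDeriv p Φ r| ≤ C
  b_pos : ∃ b₀ : ℝ, 0 < b₀ ∧ ∀ x : ℝ, b₀ ≤ b x
  b_integrable : ∀ u : Rn N, ‖u‖ = 1 →
    Integrable (fun σ : Rn N => b ⟪u, σ⟫) (sphMeas N)

/-- A solution of the spatially homogeneous Boltzmann equation with initial datum `f_in`: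
nonnegative, measurable, in `L¹_2` at each time, satisfying the Duhamel (integrated) form of
the equation, and conserving mass, momentum and energy. -/
structure IsSolution (N : ℕ) (Φ b : ℝ → ℝ) (f : ℝ → Rn N → ℝ) (fIn : Rn N → ℝ) : Prop where
  nonneg : ∀ t v, 0 ≤ f t v
  meas : Measurable (Function.uncurry f)
  mem_L1_2 : ∀ t : ℝ, 0 ≤ t → L1s N 2 (f t) < ⊤
  eqn : ∀ t : ℝ, 0 ≤ t → ∀ v : Rn N,
    f t v = fIn v + ∫ τ in Set.Ioc (0:ℝ) t, Qop N Φ b (f τ) (f τ) v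
  mass : ∀ t : ℝ, 0 ≤ t → ∫ v : Rn N, f t v = ∫ v : Rn N, fIn v
  momentum : ∀ t : ℝ, 0 ≤ t → ∀ i : Fin N,
    ∫ v : Rn N, f t v * v i = ∫ v : Rn N, fIn v * v i
  energy : ∀ t : ℝ, 0 ≤ t →
    ∫ v : Rn N, f t v * ‖v‖ ^ 2 = ∫ v : Rn N, fIn v * ‖v‖ ^ 2

/-! ### Rotations and the measure of the sphere -/

/-- The orthogonal group of `ℝ^N`, as the unitary elements of the algebra of operators, which
provides its topology. -/
def OrthGrp (N : ℕ) : Type := unitary (Rn N →L[ℝ] Rn N)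

instance orthGrp_group (N : ℕ) : Group (OrthGrp N) :=
  inferInstanceAs (Group (unitary (Rn N →L[ℝ] Rn N)))
instance orthGrp_top (N : ℕ) : TopologicalSpace (OrthGrp N) :=
  inferInstanceAs (TopologicalSpace (unitary (Rn N →L[ℝ] Rn N)))

lemma star_cont (N : ℕ) : ContinuousStar (Rn N →L[ℝ] Rn N) :=
  ⟨(starₗᵢ ℝ : (Rn N →L[ℝ] Rn N) ≃ₗᵢ⋆[ℝ] _).continuous⟩

instance orthGrp_topGroup (N : ℕ) : IsTopologicalGroup (OrthGrp N) := by
  have := star_cont N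
  exact inferInstanceAs (IsTopologicalGroup (unitary (Rn N →L[ℝ] Rn N)))

instance orthGrp_compact (N : ℕ) : CompactSpace (OrthGrp N) := by
  have : ProperSpace (Rn N →L[ℝ] Rn N) := FiniteDimensional.proper ℝ _
  have := star_cont N
  have key : IsCompact (unitary (Rn N →L[ℝ] Rn N) : Set (Rn N →L[ℝ] Rn N)) := ?_
  · exact isCompact_iff_compactSpace.1 key
  refine Metric.isCompact_of_isClosed_isBounded isClosed_unitary ?_
  refine (Metric.isBounded_iff_subset_closedBall 0).2 ⟨1, fun R hR => ?_⟩
  rw [mem_closedBall_zero_iff]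
  refine ContinuousLinearMap.opNorm_le_bound _ zero_le_one fun x => ?_
  rw [one_mul]
  exact ((Unitary.linearIsometryEquiv ⟨R, hR⟩).norm_map x).le

instance orthGrp_meas (N : ℕ) : MeasurableSpace (OrthGrp N) := borel _
instance orthGrp_borel (N : ℕ) : BorelSpace (OrthGrp N) := ⟨rfl⟩
instance orthGrp_sc (N : ℕ) : SecondCountableTopology (OrthGrp N) := by
  have : SecondCountableTopology (Rn N →L[ℝ] Rn N) := by
    have : ProperSpace (Rn N →L[ℝ] Rn N) := FiniteDimensional.proper ℝ _
    infer_instance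
  exact inferInstanceAs (SecondCountableTopology (unitary (Rn N →L[ℝ] Rn N)))

/-- The orthogonal group acts by linear isometries of `ℝ^N`. -/
def OrthGrp.iso {N : ℕ} : OrthGrp N ≃* (Rn N ≃ₗᵢ[ℝ] Rn N) := Unitary.linearIsometryEquiv

/-- Haar measure on the orthogonal group, normalised so that the whole (compact) group has
mass one. -/
def orthHaar (N : ℕ) : Measure (OrthGrp N) := Measure.haarMeasure ⊤

instance orthHaar_prob (N : ℕ) : IsProbabilityMeasure (orthHaar N) :=
  ⟨by simpa [orthHaar] using (Measure.haarMeasure_self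
    (K₀ := (⊤ : TopologicalSpace.PositiveCompacts (OrthGrp N))))⟩

instance orthHaar_inv (N : ℕ) : (orthHaar N).IsMulLeftInvariant := by
  unfold orthHaar; infer_instance

/-- The action of an orthogonal operator on a vector. -/
def rot {N : ℕ} (R : OrthGrp N) (x : Rn N) : Rn N := OrthGrp.iso R x

lemma rot_norm {N : ℕ} (R : OrthGrp N) (x : Rn N) : ‖rot R x‖ = ‖x‖ :=
  (OrthGrp.iso R).norm_map x

lemma rot_mul {N : ℕ} (R S : OrthGrp N) (x : Rn N) : rot (R * S) x = rot R (rot S x) := by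
  simp [rot, map_mul]

lemma rot_inv_rot {N : ℕ} (R : OrthGrp N) (x : Rn N) : rot R⁻¹ (rot R x) = x := by
  rw [← rot_mul]; simp [rot]

lemma rot_rot_inv {N : ℕ} (R : OrthGrp N) (x : Rn N) : rot R (rot R⁻¹ x) = x := by
  rw [← rot_mul]; simp [rot]

lemma rot_smul {N : ℕ} (R : OrthGrp N) (c : ℝ) (x : Rn N) : rot R (c • x) = c • rot R x :=
  map_smul (OrthGrp.iso R) c x

lemma rot_cont {N : ℕ} : Continuous fun p : OrthGrp N × Rn N => rot p.1 p.2 := by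
  have : (fun p : OrthGrp N × Rn N => rot p.1 p.2) =
      fun p => (Subtype.val p.1 : Rn N →L[ℝ] Rn N) p.2 := rfl
  rw [this]
  exact (continuous_subtype_val.comp continuous_fst).clm_apply continuous_snd

/-- The orthogonal group acts transitively on spheres (through hyperplane reflections). -/
lemma rot_trans {N : ℕ} {x y : Rn N} (h : ‖x‖ = ‖y‖) : ∃ R : OrthGrp N, rot R x = y := by
  refine ⟨OrthGrp.iso.symm ((ℝ ∙ (x - y))ᗮ).reflection, ?_⟩
  simp only [rot, MulEquiv.apply_symm_apply]
  exact Submodule.reflection_sub h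

lemma rot_vol {N : ℕ} (R : OrthGrp N) : MeasurePreserving (rot R) (volume : Measure (Rn N)) volume :=
  (OrthGrp.iso R).measurePreserving

lemma isometry_sph {N : ℕ} (e : Rn N ≃ₗᵢ[ℝ] Rn N) :
    MeasurePreserving e (sphMeas N) (sphMeas N) := by
  have h := (IsometryEquiv.measurePreserving_hausdorffMeasure e.toIsometryEquiv ((N : ℝ) - 1))
  have h2 := h.restrict_preimage (s := Metric.sphere (0 : Rn N) 1)
    Metric.isClosed_sphere.measurableSet
  have h3 : (e.toIsometryEquiv) ⁻¹' (Metric.sphere (0 : Rn N) 1) = Metric.sphere (0 : Rn N) 1 := by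
    ext x; simp
  rw [h3] at h2
  exact h2

lemma rot_sph {N : ℕ} (R : OrthGrp N) : MeasurePreserving (rot R) (sphMeas N) (sphMeas N) :=
  isometry_sph _

lemma sph_norm (N : ℕ) : ∀ᵐ σ ∂(sphMeas N), ‖σ‖ = 1 := by
  have := ae_restrict_mem (μ := μH[(N : ℝ) - 1])
    (Metric.isClosed_sphere (x := (0 : Rn N)) (ε := 1)).measurableSet
  filter_upwards [this] with σ h using by simpa using h

/-- A finite rotation invariant measure on the unit sphere is determined by its mass: up to
this factor it is the law of `R⁻¹ u` for a Haar distributed rotation `R` and a unit vector `u`. -/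
lemma lintegral_of_rot_inv {N : ℕ} (α : Measure (Rn N)) [IsFiniteMeasure α]
    (hα : ∀ᵐ σ ∂α, ‖σ‖ = 1) (hr : ∀ R : OrthGrp N, MeasurePreserving (rot R) α α)
    {g : Rn N → ℝ≥0∞} (hg : Measurable g) {u : Rn N} (hu : ‖u‖ = 1) :
    ∫⁻ σ, g σ ∂α = α Set.univ * ∫⁻ R, g (rot R⁻¹ u) ∂(orthHaar N) := by
  have hm : Measurable fun p : OrthGrp N × Rn N => g (rot p.1⁻¹ p.2) :=
    hg.comp (rot_cont.comp ((continuous_fst.inv).prodMk continuous_snd)).measurable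
  have h1 : ∀ R : OrthGrp N, ∫⁻ σ, g (rot R⁻¹ σ) ∂α = ∫⁻ σ, g σ ∂α := fun R =>
    (hr R⁻¹).lintegral_comp hg
  have h2 : ∀ σ : Rn N, ‖σ‖ = 1 → ∫⁻ R, g (rot R⁻¹ σ) ∂(orthHaar N)
      = ∫⁻ R, g (rot R⁻¹ u) ∂(orthHaar N) := by
    intro σ hσ
    obtain ⟨S, hS⟩ := rot_trans (hσ.trans hu.symm)
    rw [← lintegral_mul_left_eq_self (μ := orthHaar N) (fun R => g (rot R⁻¹ u)) S]
    refine lintegral_congr fun R => ?_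
    rw [mul_inv_rev, rot_mul, ← hS, rot_inv_rot]
  calc ∫⁻ σ, g σ ∂α = ∫⁻ _ : OrthGrp N, ∫⁻ σ, g σ ∂α ∂(orthHaar N) := by simp
    _ = ∫⁻ R, ∫⁻ σ, g (rot R⁻¹ σ) ∂α ∂(orthHaar N) := lintegral_congr fun R => (h1 R).symm
    _ = ∫⁻ σ, ∫⁻ R, g (rot R⁻¹ σ) ∂(orthHaar N) ∂α :=
        lintegral_lintegral_swap hm.aemeasurable
    _ = ∫⁻ _, ∫⁻ R, g (rot R⁻¹ u) ∂(orthHaar N) ∂α :=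
        lintegral_congr_ae (by filter_upwards [hα] with σ h using h2 σ h)
    _ = _ := by rw [lintegral_const, mul_comm]

/-- For Haar distributed `R` the vectors `R u` and `R⁻¹ u` have the same law, since the law of
`R u` is rotation invariant. -/
lemma lintegral_rot_eq_inv {N : ℕ} {g : Rn N → ℝ≥0∞} (hg : Measurable g) {u : Rn N}
    (hu : ‖u‖ = 1) :
    ∫⁻ R, g (rot R u) ∂(orthHaar N) = ∫⁻ R, g (rot R⁻¹ u) ∂(orthHaar N) := by
  have hm : Measurable fun R : OrthGrp N => rot R u :=
    (rot_cont.comp (continuous_id.prodMk continuous_const)).measurable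
  set α := Measure.map (fun R : OrthGrp N => rot R u) (orthHaar N) with hαdef
  have : IsProbabilityMeasure α := Measure.isProbabilityMeasure_map hm.aemeasurable
  have hrm : ∀ S : OrthGrp N, Measurable (rot S) := fun S => (rot_vol S).measurable
  rw [← lintegral_map hg hm, lintegral_of_rot_inv α ?_ ?_ hg hu]
  · simp
  · rw [hαdef, ae_map_iff hm.aemeasurable (measurableSet_eq_fun measurable_norm measurable_const)]
    exact Filter.Eventually.of_forall fun R => by rw [rot_norm, hu]
  · intro S
    refine ⟨hrm S, ?_⟩
    rw [hαdef, Measure.map_map (hrm S) hm]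
    conv_rhs => rw [← map_mul_left_eq_self (orthHaar N) S]
    rw [Measure.map_map hm (measurable_const_mul S)]
    exact congrArg (fun g => Measure.map g (orthHaar N)) (funext fun R => (rot_mul S R u).symm)

/-- The surface measure of the sphere as an average over rotations of a fixed unit vector. -/
lemma lintegral_sph_rot {N : ℕ} [IsFiniteMeasure (sphMeas N)] {g : Rn N → ℝ≥0∞}
    (hg : Measurable g) {u : Rn N} (hu : ‖u‖ = 1) :
    ∫⁻ σ, g σ ∂(sphMeas N) = sphMeas N Set.univ * ∫⁻ R, g (rot R u) ∂(orthHaar N) := by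
  rw [lintegral_rot_eq_inv hg hu, lintegral_of_rot_inv _ (sph_norm N) rot_sph hg hu]

/-- The exchange of the direction of `q` with `σ` leaves `dq dσ` invariant. Both sides are averages
over a Haar distributed rotation `R`, and they correspond under the substitution of `R q` for `q`,
so that no polar coordinates are needed. -/
lemma swap_direction {N : ℕ} [Nontrivial (Rn N)] [IsFiniteMeasure (sphMeas N)]
    {F : Rn N × Rn N → ℝ≥0∞} (hF : Measurable F) :
    ∫⁻ q : Rn N, ∫⁻ σ, F (‖q‖ • σ, ‖q‖⁻¹ • q) ∂(sphMeas N) =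
      ∫⁻ q : Rn N, ∫⁻ σ, F (q, σ) ∂(sphMeas N) := by
  have hrc : Measurable fun p : Rn N × OrthGrp N => rot p.2 p.1 :=
    (rot_cont.comp continuous_swap).measurable
  have hrci : Measurable fun p : Rn N × OrthGrp N => rot p.2⁻¹ p.1 :=
    (rot_cont.comp ((continuous_snd.inv).prodMk continuous_fst)).measurable
  have hdir : Measurable fun q : Rn N => ‖q‖⁻¹ • q := by fun_prop
  have h0 : ∀ᵐ q : Rn N, q ≠ 0 := by simp [ae_iff]
  have hunit : ∀ q : Rn N, q ≠ 0 → ‖‖q‖⁻¹ • q‖ = 1 := fun q hq => by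
    rw [norm_smul, norm_inv, norm_norm, inv_mul_cancel₀ (norm_ne_zero_iff.2 hq)]
  have hres : ∀ q : Rn N, q ≠ 0 → ‖q‖ • (‖q‖⁻¹ • q) = q := fun q hq =>
    smul_inv_smul₀ (norm_ne_zero_iff.2 hq) q
  have hL : ∫⁻ q : Rn N, ∫⁻ σ, F (‖q‖ • σ, ‖q‖⁻¹ • q) ∂(sphMeas N) =
      ∫⁻ q : Rn N, sphMeas N Set.univ * ∫⁻ R, F (rot R⁻¹ q, ‖q‖⁻¹ • q) ∂(orthHaar N) := by
    refine lintegral_congr_ae ?_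
    filter_upwards [h0] with q hq
    have hm : Measurable fun σ : Rn N => F (‖q‖ • σ, ‖q‖⁻¹ • q) := hF.comp (by fun_prop)
    rw [lintegral_sph_rot hm (hunit q hq), lintegral_rot_eq_inv hm (hunit q hq)]
    congr 1
    refine lintegral_congr fun R => ?_
    rw [← rot_smul, hres q hq]
  have hR : ∫⁻ q : Rn N, ∫⁻ σ, F (q, σ) ∂(sphMeas N) =
      ∫⁻ q : Rn N, sphMeas N Set.univ * ∫⁻ R, F (q, ‖q‖⁻¹ • rot R q) ∂(orthHaar N) := by
    refine lintegral_congr_ae ?_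
    filter_upwards [h0] with q hq
    have hm : Measurable fun σ : Rn N => F (q, σ) := hF.comp (by fun_prop)
    rw [lintegral_sph_rot hm (hunit q hq)]
    congr 1
    refine lintegral_congr fun R => ?_
    rw [rot_smul]
  have m1 : Measurable fun p : Rn N × OrthGrp N => F (rot p.2⁻¹ p.1, ‖p.1‖⁻¹ • p.1) :=
    hF.comp (hrci.prodMk (hdir.comp measurable_fst))
  have m2 : Measurable fun p : Rn N × OrthGrp N => F (p.1, ‖p.1‖⁻¹ • rot p.2 p.1) :=
    hF.comp (measurable_fst.prodMk ((measurable_fst.norm.inv).smul hrc))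
  have e1 : ∫⁻ q : Rn N, ∫⁻ R, F (rot R⁻¹ q, ‖q‖⁻¹ • q) ∂(orthHaar N) =
      ∫⁻ R, ∫⁻ q : Rn N, F (rot R⁻¹ q, ‖q‖⁻¹ • q) ∂volume ∂(orthHaar N) :=
    lintegral_lintegral_swap m1.aemeasurable
  have e2 : ∫⁻ q : Rn N, ∫⁻ R, F (q, ‖q‖⁻¹ • rot R q) ∂(orthHaar N) =
      ∫⁻ R, ∫⁻ q : Rn N, F (q, ‖q‖⁻¹ • rot R q) ∂volume ∂(orthHaar N) :=
    lintegral_lintegral_swap m2.aemeasurable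
  rw [hL, hR, lintegral_const_mul _ m1.lintegral_prod_right',
    lintegral_const_mul _ m2.lintegral_prod_right', e1, e2]
  refine congrArg (sphMeas N Set.univ * ·) (lintegral_congr fun R => ?_)
  have h3 : Measurable fun q : Rn N => F (rot R⁻¹ q, ‖q‖⁻¹ • q) :=
    hF.comp ((rot_vol R⁻¹).measurable.prodMk hdir)
  rw [← (rot_vol R).lintegral_comp h3]
  refine lintegral_congr fun q => ?_
  rw [rot_inv_rot, rot_norm]

/-! ### The angular kernel -/

/-- The unit sphere has positive surface measure: its projection to a coordinate hyperplane
is Lipschitz and contains a ball. -/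
lemma sph_univ_ne_zero {N : ℕ} (hN : 2 ≤ N) : sphMeas N Set.univ ≠ 0 := by
  obtain ⟨n, rfl⟩ : ∃ n, N = n + 1 := ⟨N - 1, by omega⟩
  have hn : 0 < n := by omega
  have hnr : (0 : ℝ) < n := by exact_mod_cast hn
  let P : Rn (n + 1) → (Fin n → ℝ) := fun x i => x i.succ
  have hP : LipschitzWith 1 P := by
    refine LipschitzWith.of_dist_le_mul fun x y => ?_
    rw [NNReal.coe_one, one_mul, dist_pi_le_iff dist_nonneg]
    intro i
    rw [EuclideanSpace.dist_eq]
    refine Real.le_sqrt_of_sq_le ?_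
    exact Finset.single_le_sum (f := fun j => dist (x j) (y j) ^ 2) (fun j _ => by positivity)
      (Finset.mem_univ i.succ)
  have hd : ((n + 1 : ℕ) : ℝ) - 1 = (Fintype.card (Fin n) : ℝ) := by simp
  have hball : Metric.ball (0 : Fin n → ℝ) (n : ℝ)⁻¹ ⊆ P '' Metric.sphere (0 : Rn (n+1)) 1 := by
    intro y hy
    have hyi : ∀ i, y i ^ 2 ≤ (n : ℝ)⁻¹ := fun i => by
      have h1 : |y i| < (n : ℝ)⁻¹ := by
        have := (norm_le_pi_norm y i).trans_lt (mem_ball_zero_iff.1 hy)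
        simpa using this
      have h2 : (n : ℝ)⁻¹ ≤ 1 := inv_le_one_of_one_le₀ (by exact_mod_cast hn)
      rw [← sq_abs]
      nlinarith [abs_nonneg (y i)]
    have hsum : ∑ i, y i ^ 2 ≤ 1 := by
      calc ∑ i, y i ^ 2 ≤ ∑ _i : Fin n, (n : ℝ)⁻¹ := Finset.sum_le_sum fun i _ => hyi i
        _ = 1 := by simp [hnr.ne']
    refine ⟨WithLp.toLp 2 (Fin.cons (√(1 - ∑ i, y i ^ 2)) y), ?_, ?_⟩
    · rw [mem_sphere_zero_iff_norm, EuclideanSpace.norm_eq, Fin.sum_univ_succ]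
      simp only [Fin.cons_zero, Fin.cons_succ, Real.norm_eq_abs, sq_abs]
      rw [Real.sq_sqrt (by linarith)]
      simp
    · ext i; simp [P]
  have h1 := hP.hausdorffMeasure_image_le (d := ((n + 1 : ℕ) : ℝ) - 1) (by simp)
    (Metric.sphere (0 : Rn (n+1)) 1)
  rw [hd, hausdorffMeasure_pi_real] at h1
  have h2 : 0 < volume (Metric.ball (0 : Fin n → ℝ) (n : ℝ)⁻¹) :=
    Metric.measure_ball_pos _ _ (by positivity)
  have h3 := h2.trans_le ((measure_mono hball).trans h1)
  rw [sphMeas, Measure.restrict_apply_univ, hd]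
  intro h0
  rw [h0] at h3
  simp at h3

/-- Angular integrals over the sphere do not depend on the reference direction. -/
lemma lintegral_inner_eq {N : ℕ} {h : ℝ → ℝ≥0∞} (hh : Measurable h) {u u' : Rn N}
    (hu : ‖u‖ = 1) (hu' : ‖u'‖ = 1) :
    ∫⁻ σ, h ⟪u, σ⟫ ∂(sphMeas N) = ∫⁻ σ, h ⟪u', σ⟫ ∂(sphMeas N) := by
  obtain ⟨R, hR⟩ := rot_trans (hu.trans hu'.symm)
  have hm : Measurable fun σ : Rn N => h ⟪u', σ⟫ := hh.comp (by fun_prop)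
  rw [← (rot_sph R).lintegral_comp hm]
  refine lintegral_congr fun σ => ?_
  rw [← hR]
  exact congrArg h ((OrthGrp.iso R).inner_map_map u σ).symm

/-- The surface measure is finite because it admits an integrable function `b` bounded below by a
positive constant. -/
lemma sph_finite {N : ℕ} (hN : 2 ≤ N) {Φ b : ℝ → ℝ} {γ : ℝ} (hK : KernelOK N Φ b γ) :
    IsFiniteMeasure (sphMeas N) := by
  obtain ⟨b₀, hb₀, hb⟩ := hK.b_pos
  have hi := hK.b_integrable (EuclideanSpace.single ⟨0, by omega⟩ 1) (by simp)
  have h1 : Integrable (fun _ : Rn N => b₀) (sphMeas N) := by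
    refine hi.mono' aestronglyMeasurable_const (Filter.Eventually.of_forall fun σ => ?_)
    rw [Real.norm_eq_abs, abs_of_pos hb₀]
    exact hb _
  rcases integrable_const_iff.1 h1 with h | h
  · exact absurd h hb₀.ne'
  · exact h

/-- The angular average of `sin²` is a positive constant. -/
lemma sph_sin_sq {N : ℕ} (hN : 2 ≤ N) [IsFiniteMeasure (sphMeas N)] :
    ∃ κ : ℝ, 0 < κ ∧ ∀ u : Rn N, ‖u‖ = 1 →
      ∫⁻ σ, ENNReal.ofReal (1 - ⟪u, σ⟫ ^ 2) ∂(sphMeas N) = ENNReal.ofReal κ := by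
  let e₀ : Rn N := EuclideanSpace.single ⟨0, by omega⟩ 1
  let e₁ : Rn N := EuclideanSpace.single ⟨1, by omega⟩ 1
  have he₀ : ‖e₀‖ = 1 := by simp [e₀]
  have he₁ : ‖e₁‖ = 1 := by simp [e₁]
  have hh : Measurable fun x : ℝ => ENNReal.ofReal (1 - x ^ 2) := by fun_prop
  set I := ∫⁻ σ, ENNReal.ofReal (1 - ⟪e₀, σ⟫ ^ 2) ∂(sphMeas N) with hI
  have hall : ∀ u : Rn N, ‖u‖ = 1 → ∫⁻ σ, ENNReal.ofReal (1 - ⟪u, σ⟫ ^ 2) ∂(sphMeas N) = I :=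
    fun u hu => lintegral_inner_eq hh hu he₀
  have htop : I ≠ ⊤ := by
    have : I ≤ ∫⁻ _, 1 ∂(sphMeas N) := lintegral_mono fun σ => by
      rw [← ENNReal.ofReal_one]
      exact ENNReal.ofReal_le_ofReal (by nlinarith [sq_nonneg ⟪e₀, σ⟫])
    rw [lintegral_one] at this
    exact (this.trans_lt (measure_lt_top _ _)).ne
  have hne : I ≠ 0 := by
    intro h0
    have ae : ∀ u : Rn N, ‖u‖ = 1 → ∀ᵐ σ ∂(sphMeas N), 1 ≤ ⟪u, σ⟫ ^ 2 := by
      intro u hu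
      have := hall u hu
      have hm : Measurable fun σ : Rn N => ENNReal.ofReal (1 - ⟪u, σ⟫ ^ 2) := by fun_prop
      rw [h0, lintegral_eq_zero_iff hm] at this
      filter_upwards [this] with σ hσ
      have := ENNReal.ofReal_eq_zero.1 hσ
      linarith
    have hF : ∀ᵐ σ ∂(sphMeas N), False := by
      filter_upwards [ae e₀ he₀, ae e₁ he₁, sph_norm N] with σ h0 h1 hσ
      have hs : ∑ i, ‖σ i‖ ^ 2 = 1 := by rw [← EuclideanSpace.norm_sq_eq, hσ, one_pow]
      have hle : ∑ i ∈ ({⟨0, by omega⟩, ⟨1, by omega⟩} : Finset (Fin N)), ‖σ i‖ ^ 2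
          ≤ ∑ i, ‖σ i‖ ^ 2 :=
        Finset.sum_le_sum_of_subset_of_nonneg (Finset.subset_univ _) fun i _ _ => sq_nonneg _
      rw [Finset.sum_pair (by simp), hs] at hle
      simp [e₀, e₁, EuclideanSpace.inner_single_left] at h0 h1 hle
      rw [← one_le_sq_iff_one_le_abs] at h0 h1
      linarith
    have := ae_iff.1 hF
    simp only [not_false_eq_true, Set.ofPred_true] at this
    exact sph_univ_ne_zero hN this
  refine ⟨I.toReal, ENNReal.toReal_pos hne htop, fun u hu => ?_⟩
  rw [ENNReal.ofReal_toReal htop, hall u hu]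

/-- If the preimage of `E` under a continuous map is null measurable, then `E` contains a Borel set
whose preimage has full measure in that of `E`: images of compact sets exhausting the preimage. -/
lemma exists_borel_subset {N : ℕ} (μ : Measure (Rn N)) [IsFiniteMeasure μ] {p : Rn N → ℝ}
    (hp : Continuous p) {E : Set ℝ} (hE : NullMeasurableSet (p ⁻¹' E) μ) :
    ∃ G ⊆ E, MeasurableSet G ∧ μ (p ⁻¹' E \ p ⁻¹' G) = 0 := by
  obtain ⟨t, hts, htm, hte⟩ := hE.exists_measurable_subset_ae_eq
  have hk : ∀ n : ℕ, ∃ K ⊆ t, IsCompact K ∧ μ (t \ K) < ((n : ℝ≥0∞) + 1)⁻¹ := fun n =>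
    htm.exists_isCompact_sdiff_lt (measure_ne_top _ _) (by simp)
  choose K hKt hKc hKm using hk
  refine ⟨⋃ n, p '' K n, ?_, MeasurableSet.iUnion fun n => ((hKc n).image hp).measurableSet, ?_⟩
  · refine Set.iUnion_subset fun n => ?_
    rintro _ ⟨x, hx, rfl⟩
    exact hts (hKt n hx)
  · have h1 : μ (p ⁻¹' E \ t) = 0 := (ae_le_set.1 hte.symm.le)
    have h2 : μ (t \ ⋃ n, K n) = 0 := by
      refine le_antisymm (_root_.le_of_forall_pos_le_add fun ε hε => ?_) zero_le
      obtain ⟨n, hn⟩ := ENNReal.exists_inv_nat_lt hε.ne'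
      rw [zero_add]
      refine (measure_mono (Set.sdiff_subset_sdiff_right (Set.subset_iUnion K n))).trans ?_
      refine (hKm n).le.trans (le_trans ?_ hn.le)
      exact ENNReal.inv_le_inv.2 le_self_add
    refine measure_mono_null ?_ (measure_union_null h1 h2)
    rintro x ⟨hxE, hxG⟩
    by_cases hxt : x ∈ t
    · refine Or.inr ⟨hxt, fun hx => hxG ?_⟩
      obtain ⟨n, hn⟩ := Set.mem_iUnion.1 hx
      exact Set.mem_iUnion.2 ⟨n, x, hn, rfl⟩
    · exact Or.inl ⟨hxE, hxt⟩

/-- Almost everywhere measurability of `b ∘ p` descends to `b` for the image measure. The converse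
of the usual composition statement needs inner regularity, as images of Borel sets need not be
Borel. -/
lemma aemeasurable_map_of_comp {N : ℕ} (μ : Measure (Rn N)) [IsFiniteMeasure μ] {p : Rn N → ℝ}
    (hp : Continuous p) {b : ℝ → ℝ} (hb : AEMeasurable (fun x => b (p x)) μ) :
    AEMeasurable b (μ.map p) := by
  refine NullMeasurable.aemeasurable fun A hA => ?_
  have h1 := hb.nullMeasurable hA
  obtain ⟨G, hGE, hGm, hG⟩ := exists_borel_subset μ hp (E := b ⁻¹' A) h1
  obtain ⟨G', hGE', hGm', hG'⟩ := exists_borel_subset μ hp (E := (b ⁻¹' A)ᶜ) h1.compl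
  have hz : μ.map p (G'ᶜ \ G) = 0 := by
    rw [Measure.map_apply hp.measurable (hGm'.compl.diff hGm)]
    refine measure_mono_null ?_ (measure_union_null hG hG')
    rintro x ⟨hx1, hx2⟩
    by_cases hx : p x ∈ b ⁻¹' A
    · exact Or.inl ⟨hx, hx2⟩
    · exact Or.inr ⟨hx, hx1⟩
  have hsub : b ⁻¹' A \ G ⊆ G'ᶜ \ G := fun x hx => ⟨fun h => hGE' h hx.1, hx.2⟩
  refine (hGm.nullMeasurableSet).congr ?_
  exact Filter.EventuallyLE.antisymm (Filter.Eventually.of_forall hGE)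
    (ae_le_set.2 (measure_mono_null hsub hz))

/-- The angular kernel may be replaced by a Borel one without changing any spherical integral:
only its values almost everywhere for the law of `⟪u, σ⟫` matter, and that law does not depend
on the unit vector `u`. -/
lemma exists_borel_kernel {N : ℕ} (hN : 2 ≤ N) {Φ b : ℝ → ℝ} {γ : ℝ} (hK : KernelOK N Φ b γ) :
    ∃ b' : ℝ → ℝ, Measurable b' ∧ (∃ b₀ : ℝ, 0 < b₀ ∧ ∀ x, b₀ ≤ b' x) ∧
      (∀ u : Rn N, ‖u‖ = 1 → ∀ᵐ σ ∂(sphMeas N), b ⟪u, σ⟫ = b' ⟪u, σ⟫) ∧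
      ∃ B : ℝ, 0 ≤ B ∧ ∀ u : Rn N, ‖u‖ = 1 →
        ∫⁻ σ, ENNReal.ofReal (b' ⟪u, σ⟫) ∂(sphMeas N) = ENNReal.ofReal B := by
  have := sph_finite hN hK
  obtain ⟨b₀, hb₀, hb⟩ := hK.b_pos
  let e₀ : Rn N := EuclideanSpace.single ⟨0, by omega⟩ 1
  have he₀ : ‖e₀‖ = 1 := by simp [e₀]
  have hi := hK.b_integrable e₀ he₀
  have hpc : Continuous fun σ : Rn N => ⟪e₀, σ⟫ := by fun_prop
  have hae := aemeasurable_map_of_comp (sphMeas N) hpc hi.aemeasurable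
  let b' : ℝ → ℝ := fun x => max b₀ (hae.mk b x)
  have hb'm : Measurable b' := measurable_const.max hae.measurable_mk
  have h1 : ∀ᵐ σ ∂(sphMeas N), b ⟪e₀, σ⟫ = hae.mk b ⟪e₀, σ⟫ :=
    ae_of_ae_map hpc.measurable.aemeasurable hae.ae_eq_mk
  have h2 : ∀ᵐ σ ∂(sphMeas N), b ⟪e₀, σ⟫ = b' ⟪e₀, σ⟫ := by
    filter_upwards [h1] with σ hσ
    have := hb ⟪e₀, σ⟫
    simp only [b']
    rw [← hσ, max_eq_right this]
  have hfin : ∫⁻ σ, ENNReal.ofReal (b' ⟪e₀, σ⟫) ∂(sphMeas N) ≠ ⊤ := by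
    have h3 : Integrable (fun σ : Rn N => b' ⟪e₀, σ⟫) (sphMeas N) := hi.congr h2
    exact (h3.lintegral_lt_top).ne
  refine ⟨b', hb'm, ⟨b₀, hb₀, fun x => le_max_left _ _⟩, fun u hu => ?_,
    (∫⁻ σ, ENNReal.ofReal (b' ⟪e₀, σ⟫) ∂(sphMeas N)).toReal, ENNReal.toReal_nonneg,
    fun u hu => ?_⟩
  · obtain ⟨R, hR⟩ := rot_trans (hu.trans he₀.symm)
    have h3 := (rot_sph R).quasiMeasurePreserving.ae h2
    filter_upwards [h3] with σ hσ
    have : ⟪e₀, rot R σ⟫ = ⟪u, σ⟫ := by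
      rw [← hR]; exact (OrthGrp.iso R).inner_map_map u σ
    rwa [this] at hσ
  · rw [ENNReal.ofReal_toReal hfin]
    exact lintegral_inner_eq (h := fun x => ENNReal.ofReal (b' x)) hb'm.ennreal_ofReal hu he₀

/-! ### Povzner's inequality -/

/-- The modulus of strict convexity of `x ↦ x ^ p`, measured at the midpoint of `[0, 1]`. -/
lemma half_rpow_pos {p : ℝ} (hp : 1 < p) : 0 < 1 - 2 * (1 / 2 : ℝ) ^ p := by
  have : (1 / 2 : ℝ) ^ p < (1 / 2 : ℝ) ^ (1 : ℝ) :=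
    Real.rpow_lt_rpow_of_exponent_gt (by norm_num) (by norm_num) hp
  rw [Real.rpow_one] at this
  linarith

lemma rpow_add_compl_le_aux {p t : ℝ} (hp : 1 < p) (ht : 0 ≤ t) (ht' : t ≤ 1 / 2) :
    t ^ p + (1 - t) ^ p ≤ 1 - 2 * (1 - 2 * (1 / 2 : ℝ) ^ p) * (t * (1 - t)) := by
  have hc := convexOn_rpow hp.le
  have h1 := hc.2 (Set.mem_Ici.2 (le_refl (0 : ℝ))) (Set.mem_Ici.2 (by norm_num : (0 : ℝ) ≤ 1 / 2))
    (by linarith : 0 ≤ 1 - 2 * t) (by linarith : 0 ≤ 2 * t) (by ring)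
  have h2 := hc.2 (Set.mem_Ici.2 (zero_le_one (α := ℝ))) (Set.mem_Ici.2 (by norm_num : (0 : ℝ) ≤ 1 / 2))
    (by linarith : 0 ≤ 1 - 2 * t) (by linarith : 0 ≤ 2 * t) (by ring)
  simp only [smul_eq_mul, Real.one_rpow, Real.zero_rpow (by linarith : p ≠ 0)] at h1 h2
  rw [show (1 - 2 * t) * 0 + 2 * t * (1 / 2) = t by ring] at h1
  rw [show (1 - 2 * t) * 1 + 2 * t * (1 / 2) = 1 - t by ring] at h2
  have h3 := half_rpow_pos hp
  nlinarith [mul_nonneg h3.le (mul_nonneg ht ht)]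

/-- Quantitative strict convexity of `x ↦ x ^ p` on a segment. -/
lemma rpow_add_compl_le {p t : ℝ} (hp : 1 < p) (ht : 0 ≤ t) (ht' : t ≤ 1) :
    t ^ p + (1 - t) ^ p ≤ 1 - 2 * (1 - 2 * (1 / 2 : ℝ) ^ p) * (t * (1 - t)) := by
  rcases le_total t (1 / 2) with h | h
  · exact rpow_add_compl_le_aux hp ht h
  · have := rpow_add_compl_le_aux hp (t := 1 - t) (by linarith) (by linarith)
    rw [show 1 - (1 - t) = t by ring] at this
    linarith

/-- The sum of `p`-th powers falls short of the power of the sum by an amount proportional to the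
product of the two terms. -/
lemma rpow_add_rpow_le {p x y : ℝ} (hp : 1 < p) (hx : 0 < x) (hy : 0 < y) :
    x ^ p + y ^ p ≤ (x + y) ^ p
      - 2 * (1 - 2 * (1 / 2 : ℝ) ^ p) * ((x + y) ^ p * (x * y / (x + y) ^ 2)) := by
  have hxy : 0 < x + y := by positivity
  have h := rpow_add_compl_le hp (t := x / (x + y)) (by positivity)
    ((div_le_one hxy).2 (by linarith))
  have h1 : 1 - x / (x + y) = y / (x + y) := by field_simp; ring
  rw [h1, Real.div_rpow hx.le hxy.le, Real.div_rpow hy.le hxy.le] at h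
  have hE : 0 < (x + y) ^ p := Real.rpow_pos_of_pos hxy p
  have h2 := mul_le_mul_of_nonneg_left h hE.le
  have h3 : (x + y) ^ p * (x ^ p / (x + y) ^ p + y ^ p / (x + y) ^ p) = x ^ p + y ^ p := by
    field_simp
  rw [h3] at h2
  refine h2.trans (le_of_eq ?_)
  field_simp

lemma add_rpow_le_aux {p x y : ℝ} (hp : 1 < p) (hy : 0 < y) (hyx : y ≤ x) :
    (x + y) ^ p ≤ x ^ p + p * 2 ^ (p - 1) * (x ^ (p - 1) * y) := by
  have hx : 0 < x := hy.trans_le hyx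
  have hxy : 0 < x + y := by positivity
  -- Bernoulli's inequality is the tangent line bound at `x + y`.
  have h := one_add_mul_self_le_rpow_one_add (s := -(y / (x + y))) (p := p)
    (by rw [neg_le_neg_iff, div_le_one hxy]; linarith) hp.le
  have h1 : 1 + -(y / (x + y)) = x / (x + y) := by field_simp; ring
  rw [h1, Real.div_rpow hx.le hxy.le] at h
  have hE : 0 < (x + y) ^ p := Real.rpow_pos_of_pos hxy p
  rw [le_div_iff₀ hE] at h
  have h2 : (x + y) ^ p = (x + y) ^ (p - 1) * (x + y) := by
    rw [← Real.rpow_add_one hxy.ne']; ring_nf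
  have h3 : (1 + p * -(y / (x + y))) * (x + y) ^ p
      = (x + y) ^ p - p * ((x + y) ^ (p - 1) * y) := by
    rw [h2]; field_simp; ring
  have h4 : (x + y) ^ (p - 1) ≤ 2 ^ (p - 1) * x ^ (p - 1) := by
    rw [← Real.mul_rpow (by norm_num) hx.le]
    exact Real.rpow_le_rpow hxy.le (by linarith) (by linarith)
  have h5 : p * ((x + y) ^ (p - 1) * y) ≤ p * ((2 ^ (p - 1) * x ^ (p - 1)) * y) := by gcongr
  rw [h3] at h
  nlinarith

/-- The power of a sum exceeds the sum of powers by at most cross terms of lower degree in each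
variable. -/
lemma add_rpow_le_cross {p x y : ℝ} (hp : 1 < p) (hx : 0 < x) (hy : 0 < y) :
    (x + y) ^ p ≤ x ^ p + y ^ p + p * 2 ^ (p - 1) * (x ^ (p - 1) * y + y ^ (p - 1) * x) := by
  have h2 : 0 ≤ p * 2 ^ (p - 1) := by positivity
  have hx1 : 0 < x ^ (p - 1) := Real.rpow_pos_of_pos hx _
  have hy1 : 0 < y ^ (p - 1) := Real.rpow_pos_of_pos hy _
  have hx2 : 0 < x ^ p := Real.rpow_pos_of_pos hx _
  have hy2 : 0 < y ^ p := Real.rpow_pos_of_pos hy _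
  have ha := mul_nonneg h2 (mul_pos hx1 hy).le
  have hb := mul_nonneg h2 (mul_pos hy1 hx).le
  rcases le_total y x with h | h
  · have := add_rpow_le_aux hp hy h
    linarith
  · have := add_rpow_le_aux hp hx h
    rw [add_comm y x] at this
    linarith

/-- The weight `1 + |v|²`, whose power `s / 2` defines the norm of `L¹_s`. -/
def br {N : ℕ} (v : Rn N) : ℝ := 1 + ‖v‖ ^ 2

lemma br_pos {N : ℕ} (v : Rn N) : 0 < br v := by unfold br; positivity
lemma one_le_br {N : ℕ} (v : Rn N) : 1 ≤ br v := by unfold br; nlinarith [sq_nonneg ‖v‖]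
lemma br_cont {N : ℕ} : Continuous (br : Rn N → ℝ) := by unfold br; fun_prop

lemma norm_vP_sq {N : ℕ} (v w : Rn N) {σ : Rn N} (hσ : ‖σ‖ = 1) :
    ‖vP N v w σ‖ ^ 2 = (‖v‖ ^ 2 + ‖w‖ ^ 2) / 2 + ‖v - w‖ / 2 * ⟪v + w, σ⟫ := by
  have h1 := norm_add_sq_real v w
  have h2 := norm_sub_sq_real v w
  rw [vP, norm_add_sq_real, norm_smul, norm_smul, hσ, real_inner_smul_left, real_inner_smul_right,
    mul_pow, h1, Real.norm_eq_abs, Real.norm_eq_abs, mul_one, sq_abs, sq_abs, div_pow, h2]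
  norm_num
  ring

lemma norm_vSP_sq {N : ℕ} (v w : Rn N) {σ : Rn N} (hσ : ‖σ‖ = 1) :
    ‖vSP N v w σ‖ ^ 2 = (‖v‖ ^ 2 + ‖w‖ ^ 2) / 2 - ‖v - w‖ / 2 * ⟪v + w, σ⟫ := by
  have h := norm_vP_sq v w (σ := -σ) (by rw [norm_neg, hσ])
  rw [inner_neg_right] at h
  have h2 : vSP N v w σ = vP N v w (-σ) := by simp [vP, vSP, sub_eq_add_neg]
  rw [h2, h]; ring

/-- Kinetic energy is conserved in a collision. -/
lemma br_add {N : ℕ} (v w : Rn N) {σ : Rn N} (hσ : ‖σ‖ = 1) :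
    br (vP N v w σ) + br (vSP N v w σ) = br v + br w := by
  unfold br; rw [norm_vP_sq v w hσ, norm_vSP_sq v w hσ]; ring

/-- The post-collisional energy is shared between the two particles as soon as `σ` is not aligned
with the centre of mass velocity. -/
lemma br_mul {N : ℕ} (v w n : Rn N) (hn : ‖v + w‖ • n = v + w) {σ : Rn N} (hσ : ‖σ‖ = 1) :
    (br v + br w) ^ 2 / 4 * (1 - ⟪n, σ⟫ ^ 2) ≤ br (vP N v w σ) * br (vSP N v w σ) := by
  have h1 : ⟪v + w, σ⟫ = ‖v + w‖ * ⟪n, σ⟫ := by rw [← real_inner_smul_left, hn]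
  unfold br; rw [norm_vP_sq v w hσ, norm_vSP_sq v w hσ, h1]
  have h2 : ‖v + w‖ ^ 2 + ‖v - w‖ ^ 2 = 2 * (‖v‖ ^ 2 + ‖w‖ ^ 2) := by
    have := parallelogram_law_with_norm ℝ v w; nlinarith
  set A := ‖v + w‖; set B := ‖v - w‖; set a := ‖v‖ ^ 2 + ‖w‖ ^ 2; set x := ⟪n, σ⟫
  have ha : 0 ≤ a := by positivity
  have h3 : A * B ≤ a := by nlinarith [sq_nonneg (A - B)]
  have hA : 0 ≤ A * B := by positivity
  have h4 : (A * B) ^ 2 ≤ (2 + a) ^ 2 := by gcongr; linarith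
  have h5 := mul_le_mul_of_nonneg_right h4 (sq_nonneg x)
  have h6 : 1 + ‖v‖ ^ 2 + (1 + ‖w‖ ^ 2) = 2 + a := by ring
  rw [h6]
  nlinarith

/-- Pointwise form of Povzner's inequality. The post-collisional weights are compared with
`(br v + br w) ^ p` by conservation of energy; the sharing of energy gives the coercive term and
the expansion of the power of the sum gives the cross terms. Here `n` is the direction of
`v + w`. -/
lemma povzner {N : ℕ} {p : ℝ} (hp : 1 < p) (v w n : Rn N) (hn : ‖v + w‖ • n = v + w)
    {σ : Rn N} (hσ : ‖σ‖ = 1) (hn1 : ‖n‖ = 1) :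
    br (vP N v w σ) ^ p + br (vSP N v w σ) ^ p
      + (1 - 2 * (1 / 2 : ℝ) ^ p) / 2 * (1 - ⟪n, σ⟫ ^ 2) * (br v ^ p + br w ^ p) ≤
    br v ^ p + br w ^ p
      + p * 2 ^ (p - 1) * (br v ^ (p - 1) * br w + br w ^ (p - 1) * br v) := by
  have h1 := rpow_add_rpow_le hp (br_pos (vP N v w σ)) (br_pos (vSP N v w σ))
  rw [br_add v w hσ] at h1
  have h2 := add_rpow_le_cross hp (br_pos v) (br_pos w)
  have h3 := br_mul v w n hn hσ
  have hc := half_rpow_pos hp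
  set c := 1 - 2 * (1 / 2 : ℝ) ^ p
  have he : 0 < br v + br w := add_pos (br_pos v) (br_pos w)
  have h4 : (1 - ⟪n, σ⟫ ^ 2) / 4 ≤ br (vP N v w σ) * br (vSP N v w σ) / (br v + br w) ^ 2 := by
    rw [le_div_iff₀ (by positivity)]; linarith
  have h5 : br v ^ p + br w ^ p ≤ (br v + br w) ^ p :=
    Real.add_rpow_le_rpow_add (br_pos v).le (br_pos w).le hp.le
  have h6 : 0 ≤ 1 - ⟪n, σ⟫ ^ 2 := by
    have h := abs_real_inner_le_norm n σ
    rw [hn1, hσ, one_mul] at h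
    have := (sq_le_one_iff_abs_le_one _).2 h
    linarith
  have hE : 0 ≤ (br v + br w) ^ p := (Real.rpow_pos_of_pos he p).le
  have h7 := mul_le_mul_of_nonneg_left h4 (mul_nonneg (mul_nonneg zero_le_two hc.le) hE)
  have h8 := mul_le_mul_of_nonneg_left h5 (mul_nonneg (half_pos hc).le h6)
  nlinarith

/-- The relative velocity weight dominates a product of one-particle weights. -/
lemma weight_lower {N : ℕ} {γ : ℝ} (hγ : -2 < γ) (hγ' : γ ≤ 0) (v w : Rn N) :
    1 / 4 * (br v ^ (γ / 2) * br w ^ (-1 : ℝ)) ≤ (1 + ‖v - w‖) ^ γ := by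
  have h1 : (1 + ‖v - w‖) ^ 2 ≤ 4 * (br v * br w) := by
    have h := norm_sub_le v w
    have hv := norm_nonneg v
    have hw := norm_nonneg w
    have h2 : (1 + ‖v - w‖) ^ 2 ≤ (1 + ‖v‖ + ‖w‖) ^ 2 := by
      have := norm_nonneg (v - w)
      exact pow_le_pow_left₀ (by positivity) (by linarith) 2
    refine h2.trans ?_
    unfold br
    nlinarith [sq_nonneg (‖v‖ - 1), sq_nonneg (‖w‖ - 1), sq_nonneg (‖v‖ - ‖w‖),
      sq_nonneg (‖v‖ * ‖w‖), mul_nonneg hv hw]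
  have h0 : 0 < 1 + ‖v - w‖ := by positivity
  have h3 : (1 + ‖v - w‖) ^ γ = ((1 + ‖v - w‖) ^ 2) ^ (γ / 2) := by
    rw [← Real.rpow_natCast, ← Real.rpow_mul h0.le]; congr 1; push_cast; ring
  have hv := br_pos v
  have hw := br_pos w
  have h4 : (4 * (br v * br w)) ^ (γ / 2) ≤ ((1 + ‖v - w‖) ^ 2) ^ (γ / 2) :=
    Real.rpow_le_rpow_of_nonpos (by positivity) h1 (by linarith)
  rw [h3]
  refine le_trans ?_ h4
  rw [Real.mul_rpow (by norm_num) (by positivity), Real.mul_rpow hv.le hw.le]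
  have h5 : (1 / 4 : ℝ) ≤ 4 ^ (γ / 2) := by
    have : (4 : ℝ) ^ (-1 : ℝ) ≤ 4 ^ (γ / 2) :=
      Real.rpow_le_rpow_of_exponent_le (by norm_num) (by linarith)
    rw [Real.rpow_neg_one] at this
    linarith
  have h6 : br w ^ (-1 : ℝ) ≤ br w ^ (γ / 2) :=
    Real.rpow_le_rpow_of_exponent_le (one_le_br w) (by linarith)
  gcongr

/-! ### The collision change of variables -/

lemma vP_cont {N : ℕ} : Continuous fun x : Rn N × Rn N × Rn N => vP N x.1 x.2.1 x.2.2 := by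
  unfold vP; fun_prop
lemma vSP_cont {N : ℕ} : Continuous fun x : Rn N × Rn N × Rn N => vSP N x.1 x.2.1 x.2.2 := by
  unfold vSP; fun_prop
lemma cosTheta_meas {N : ℕ} :
    Measurable fun x : Rn N × Rn N × Rn N => cosTheta N x.1 x.2.1 x.2.2 := by
  unfold cosTheta
  have h1 : Continuous fun x : Rn N × Rn N × Rn N => ⟪x.2.2, x.1 - x.2.1⟫ := by fun_prop
  have h2 : Continuous fun x : Rn N × Rn N × Rn N => ‖x.1 - x.2.1‖ := by fun_prop
  exact h1.measurable.div h2.measurable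

/-- Passage to centre of mass and relative velocity. -/
lemma lintegral_com {N : ℕ} {K : Rn N × Rn N → ℝ≥0∞} (hK : Measurable K) :
    ∫⁻ v : Rn N, ∫⁻ w : Rn N, K (v, w) =
      ∫⁻ z : Rn N, ∫⁻ q : Rn N, K (z + (2:ℝ)⁻¹ • q, z - (2:ℝ)⁻¹ • q) := by
  have m1 : Measurable fun x : Rn N × Rn N => K (x.1, x.1 - x.2) := hK.comp (by fun_prop)
  have m2 : Measurable fun x : Rn N × Rn N =>
      K (x.1 + (2:ℝ)⁻¹ • x.2, x.1 - (2:ℝ)⁻¹ • x.2) := hK.comp (by fun_prop)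
  calc ∫⁻ v : Rn N, ∫⁻ w : Rn N, K (v, w)
      = ∫⁻ v : Rn N, ∫⁻ q : Rn N, K (v, v - q) := lintegral_congr fun v =>
        (lintegral_sub_left_eq_self (fun w => K (v, w)) v).symm
    _ = ∫⁻ q : Rn N, ∫⁻ v : Rn N, K (v, v - q) := lintegral_lintegral_swap m1.aemeasurable
    _ = ∫⁻ q : Rn N, ∫⁻ z : Rn N, K (z + (2:ℝ)⁻¹ • q, z - (2:ℝ)⁻¹ • q) := by
        refine lintegral_congr fun q => ?_
        rw [← lintegral_add_right_eq_self (fun v => K (v, v - q)) ((2:ℝ)⁻¹ • q)]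
        refine lintegral_congr fun z => ?_
        have : z + (2:ℝ)⁻¹ • q - q = z - (2:ℝ)⁻¹ • q := by module
        rw [this]
    _ = _ := (lintegral_lintegral_swap m2.aemeasurable).symm

/-- The collision transformation `(v, v_*, σ) ↦ (v', v'_*, (v - v_*)/|v - v_*|)` preserves
`dv dv_* dσ`. -/
lemma collision_change {N : ℕ} [Nontrivial (Rn N)] [IsFiniteMeasure (sphMeas N)]
    {H : Rn N × Rn N × Rn N → ℝ≥0∞} (hH : Measurable H) :
    ∫⁻ v : Rn N, ∫⁻ w : Rn N, ∫⁻ σ,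
      H (vP N v w σ, vSP N v w σ, ‖v - w‖⁻¹ • (v - w)) ∂(sphMeas N) =
    ∫⁻ v : Rn N, ∫⁻ w : Rn N, ∫⁻ σ, H (v, w, σ) ∂(sphMeas N) := by
  have hdir : Measurable fun x : (Rn N × Rn N) × Rn N => ‖x.1.1 - x.1.2‖⁻¹ • (x.1.1 - x.1.2) := by
    fun_prop
  have m0 : Measurable fun x : (Rn N × Rn N) × Rn N => (x.1.1, x.1.2, x.2) := by fun_prop
  have m1 : Measurable fun x : (Rn N × Rn N) × Rn N =>
      H (vP N x.1.1 x.1.2 x.2, vSP N x.1.1 x.1.2 x.2, ‖x.1.1 - x.1.2‖⁻¹ • (x.1.1 - x.1.2)) :=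
    hH.comp ((vP_cont.measurable.comp m0).prodMk ((vSP_cont.measurable.comp m0).prodMk hdir))
  have m2 : Measurable fun x : (Rn N × Rn N) × Rn N => H (x.1.1, x.1.2, x.2) := hH.comp m0
  have c1 := lintegral_com (m1.lintegral_prod_right' (ν := sphMeas N))
  have c2 := lintegral_com (m2.lintegral_prod_right' (ν := sphMeas N))
  simp only at c1 c2
  rw [c1, c2]
  refine lintegral_congr fun z => ?_
  have m3 : Measurable fun x : Rn N × Rn N =>
      H (z + (2:ℝ)⁻¹ • x.1, z - (2:ℝ)⁻¹ • x.1, x.2) := hH.comp (by fun_prop)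
  rw [← swap_direction m3]
  refine lintegral_congr fun q => lintegral_congr fun σ => ?_
  have e1 : z + (2:ℝ)⁻¹ • q - (z - (2:ℝ)⁻¹ • q) = q := by module
  have e2 : (2:ℝ)⁻¹ • (z + (2:ℝ)⁻¹ • q + (z - (2:ℝ)⁻¹ • q)) = z := by module
  have e3 : (‖q‖ / 2) • σ = (2:ℝ)⁻¹ • ‖q‖ • σ := by rw [smul_smul]; congr 1; ring
  rw [vP, vSP, e1, e2, e3]

/-- The collision kernel, as a function of `(v, v_*, σ)` with values in `[0, ∞]`. -/
def kk (N : ℕ) (Φ b : ℝ → ℝ) (v w σ : Rn N) : ℝ≥0∞ :=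
  ENNReal.ofReal (Φ ‖v - w‖ * b (cosTheta N v w σ))

lemma kk_meas {N : ℕ} {Φ b : ℝ → ℝ} (hΦ : Measurable Φ) (hb : Measurable b) :
    Measurable fun x : Rn N × Rn N × Rn N => kk N Φ b x.1 x.2.1 x.2.2 := by
  unfold kk
  have h2 : Continuous fun x : Rn N × Rn N × Rn N => ‖x.1 - x.2.1‖ := by fun_prop
  exact ((hΦ.comp h2.measurable).mul (hb.comp cosTheta_meas)).ennreal_ofReal

/-- The collision transformation is an involution which leaves the kernel invariant. -/
lemma collision_invol {N : ℕ} {Φ b : ℝ → ℝ} {v w σ : Rn N} (hvw : v ≠ w) (hσ : ‖σ‖ = 1) :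
    vP N (vP N v w σ) (vSP N v w σ) (‖v - w‖⁻¹ • (v - w)) = v ∧
    kk N Φ b (vP N v w σ) (vSP N v w σ) (‖v - w‖⁻¹ • (v - w)) = kk N Φ b v w σ := by
  have h0 : ‖v - w‖ ≠ 0 := norm_ne_zero_iff.2 (sub_ne_zero.2 hvw)
  have e1 : vP N v w σ - vSP N v w σ = ‖v - w‖ • σ := by unfold vP vSP; module
  have e2 : ‖vP N v w σ - vSP N v w σ‖ = ‖v - w‖ := by rw [e1, norm_smul, hσ]; simp
  have e3 : vP N v w σ + vSP N v w σ = v + w := by unfold vP vSP; module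
  constructor
  · rw [vP, e2, e3, smul_smul]
    have : ‖v - w‖ / 2 * ‖v - w‖⁻¹ = (2:ℝ)⁻¹ := by field_simp
    rw [this]; module
  · unfold kk cosTheta
    rw [e2, e1, real_inner_smul_left, real_inner_smul_right, real_inner_comm]
    congr 4
    field_simp

lemma slice2 {N : ℕ} {G : Rn N × Rn N × Rn N → ℝ≥0∞} (hG : Measurable G) (v : Rn N) :
    Measurable fun y : Rn N × Rn N => G (v, y) := hG.comp measurable_prodMk_left

lemma slice1 {N : ℕ} {G : Rn N × Rn N × Rn N → ℝ≥0∞} (hG : Measurable G) (v w : Rn N) :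
    Measurable fun y : Rn N => G (v, w, y) :=
  (slice2 hG v).comp measurable_prodMk_left

lemma slice_int {N : ℕ} [IsFiniteMeasure (sphMeas N)] {G : Rn N × Rn N × Rn N → ℝ≥0∞}
    (hG : Measurable G) (v : Rn N) :
    Measurable fun w : Rn N => ∫⁻ σ, G (v, w, σ) ∂(sphMeas N) :=
  (slice2 hG v).lintegral_prod_right'

/-- If `(v, v_*, σ) ↦ G (v, v_*, σ) ψ(v)` is the pull-back of `H` by the collision transformation,
then the two have the same integral. -/
lemma gain_abs {N : ℕ} [Nontrivial (Rn N)] [IsFiniteMeasure (sphMeas N)]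
    {G H : Rn N × Rn N × Rn N → ℝ≥0∞} {ψ : Rn N → ℝ≥0∞} (hG : Measurable G) (hH : Measurable H)
    (hGH : ∀ v w σ : Rn N, w ≠ v → ‖σ‖ = 1 → G (v, w, σ) * ψ v =
      H (vP N v w σ, vSP N v w σ, ‖v - w‖⁻¹ • (v - w))) :
    ∫⁻ v : Rn N, (∫⁻ w : Rn N, ∫⁻ σ, G (v, w, σ) ∂(sphMeas N)) * ψ v =
    ∫⁻ v : Rn N, ∫⁻ w : Rn N, ∫⁻ σ, H (v, w, σ) ∂(sphMeas N) := by
  rw [← collision_change hH]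
  refine lintegral_congr fun v => ?_
  rw [← lintegral_mul_const _ (slice_int hG v)]
  have hne : ∀ᵐ w : Rn N, w ≠ v := by simp [ae_iff]
  refine lintegral_congr_ae ?_
  filter_upwards [hne] with w hw
  rw [← lintegral_mul_const _ (slice1 hG v w)]
  refine lintegral_congr_ae ?_
  filter_upwards [sph_norm N] with σ hσ
  exact hGH v w σ hw hσ

/-- Weak form of the gain term: the test function is moved to the post-collisional velocity. -/
lemma gain_weak {N : ℕ} [Nontrivial (Rn N)] [IsFiniteMeasure (sphMeas N)] {Φ b : ℝ → ℝ}
    (hΦ : Measurable Φ) (hb : Measurable b) {F ψ : Rn N → ℝ≥0∞} (hF : Measurable F)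
    (hψ : Measurable ψ) :
    ∫⁻ v : Rn N, (∫⁻ w : Rn N, ∫⁻ σ, kk N Φ b v w σ * (F (vSP N v w σ) * F (vP N v w σ))
        ∂(sphMeas N)) * ψ v =
    ∫⁻ v : Rn N, ∫⁻ w : Rn N, ∫⁻ σ, kk N Φ b v w σ * (F w * F v) * ψ (vP N v w σ)
      ∂(sphMeas N) := by
  have hk := kk_meas (N := N) hΦ hb
  have mH : Measurable fun x : Rn N × Rn N × Rn N =>
      kk N Φ b x.1 x.2.1 x.2.2 * (F x.2.1 * F x.1) * ψ (vP N x.1 x.2.1 x.2.2) :=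
    (hk.mul ((hF.comp (by fun_prop)).mul (hF.comp (by fun_prop)))).mul
      (hψ.comp vP_cont.measurable)
  have mG : Measurable fun x : Rn N × Rn N × Rn N =>
      kk N Φ b x.1 x.2.1 x.2.2 * (F (vSP N x.1 x.2.1 x.2.2) * F (vP N x.1 x.2.1 x.2.2)) :=
    hk.mul ((hF.comp vSP_cont.measurable).mul (hF.comp vP_cont.measurable))
  refine gain_abs mG mH fun v w σ hw hσ => ?_
  obtain ⟨h1, h2⟩ := collision_invol (Φ := Φ) (b := b) hw.symm hσ
  simp only [h1, h2]

/-- Exchange of the two colliding particles, which reverses `σ`. -/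
lemma exchange {N : ℕ} [IsFiniteMeasure (sphMeas N)] {H : Rn N × Rn N × Rn N → ℝ≥0∞}
    (hH : Measurable H) :
    ∫⁻ v : Rn N, ∫⁻ w : Rn N, ∫⁻ σ, H (w, v, -σ) ∂(sphMeas N) =
    ∫⁻ v : Rn N, ∫⁻ w : Rn N, ∫⁻ σ, H (v, w, σ) ∂(sphMeas N) := by
  have m0 : Measurable fun x : (Rn N × Rn N) × Rn N => H (x.2, x.1.2, x.1.1) :=
    hH.comp (by fun_prop)
  have m1 : Measurable fun x : (Rn N × Rn N) × Rn N => H (x.1.2, x.1.1, x.2) :=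
    hH.comp (by fun_prop)
  have e1 : ∀ v w : Rn N, ∫⁻ σ, H (w, v, -σ) ∂(sphMeas N) = ∫⁻ σ, H (w, v, σ) ∂(sphMeas N) :=
    fun v w => (isometry_sph (LinearIsometryEquiv.neg ℝ)).lintegral_comp
      (f := fun σ => H (w, v, σ)) (hH.comp (by fun_prop))
  simp_rw [e1]
  exact lintegral_lintegral_swap (m1.lintegral_prod_right').aemeasurable

lemma kk_neg {N : ℕ} {Φ b : ℝ → ℝ} (v w σ : Rn N) : kk N Φ b w v (-σ) = kk N Φ b v w σ := by
  unfold kk cosTheta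
  rw [norm_sub_rev w v, ← neg_sub v w, inner_neg_neg]

lemma vP_neg {N : ℕ} (v w σ : Rn N) : vP N w v (-σ) = vSP N v w σ := by
  unfold vP vSP; rw [norm_sub_rev w v]; module

/-- By exchange of the particles, the gain term may be tested at either post-collisional velocity. -/
lemma gain_sym {N : ℕ} [IsFiniteMeasure (sphMeas N)] {Φ b : ℝ → ℝ}
    (hΦ : Measurable Φ) (hb : Measurable b) {F ψ : Rn N → ℝ≥0∞} (hF : Measurable F)
    (hψ : Measurable ψ) :
    ∫⁻ v : Rn N, ∫⁻ w : Rn N, ∫⁻ σ, kk N Φ b v w σ * (F w * F v) * ψ (vSP N v w σ)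
      ∂(sphMeas N) =
    ∫⁻ v : Rn N, ∫⁻ w : Rn N, ∫⁻ σ, kk N Φ b v w σ * (F w * F v) * ψ (vP N v w σ)
      ∂(sphMeas N) := by
  have hk := kk_meas (N := N) hΦ hb
  have mH : Measurable fun x : Rn N × Rn N × Rn N =>
      kk N Φ b x.1 x.2.1 x.2.2 * (F x.2.1 * F x.1) * ψ (vP N x.1 x.2.1 x.2.2) :=
    (hk.mul ((hF.comp (by fun_prop)).mul (hF.comp (by fun_prop)))).mul
      (hψ.comp vP_cont.measurable)
  rw [← exchange mH]
  simp only [kk_neg, vP_neg]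
  refine lintegral_congr fun v => lintegral_congr fun w => lintegral_congr fun σ => ?_
  rw [mul_comm (F v)]

lemma loss_sym {N : ℕ} [IsFiniteMeasure (sphMeas N)] {Φ b : ℝ → ℝ}
    (hΦ : Measurable Φ) (hb : Measurable b) {F ψ : Rn N → ℝ≥0∞} (hF : Measurable F)
    (hψ : Measurable ψ) :
    ∫⁻ v : Rn N, ∫⁻ w : Rn N, ∫⁻ σ, kk N Φ b v w σ * (F w * F v) * ψ w ∂(sphMeas N) =
    ∫⁻ v : Rn N, ∫⁻ w : Rn N, ∫⁻ σ, kk N Φ b v w σ * (F w * F v) * ψ v ∂(sphMeas N) := by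
  have hk := kk_meas (N := N) hΦ hb
  have mH : Measurable fun x : Rn N × Rn N × Rn N =>
      kk N Φ b x.1 x.2.1 x.2.2 * (F x.2.1 * F x.1) * ψ x.1 :=
    (hk.mul ((hF.comp (by fun_prop)).mul (hF.comp (by fun_prop)))).mul
      (hψ.comp (by fun_prop))
  rw [← exchange mH]
  simp only [kk_neg]
  refine lintegral_congr fun v => lintegral_congr fun w => lintegral_congr fun σ => ?_
  rw [mul_comm (F v)]

/-! ### The averaged Povzner inequality -/

/-- The moment `∫ F(v) (1+|v|²)^r dv` of order `2r`. -/
def mom {N : ℕ} (F : Rn N → ℝ≥0∞) (r : ℝ) : ℝ≥0∞ := ∫⁻ v, F v * ENNReal.ofReal (br v ^ r)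

lemma br_rpow_meas {N : ℕ} (r : ℝ) : Measurable fun v : Rn N => ENNReal.ofReal (br v ^ r) :=
  (br_cont.measurable.pow_const r).ennreal_ofReal

lemma cosTheta_eq {N : ℕ} (v w σ : Rn N) :
    cosTheta N v w σ = ⟪‖v - w‖⁻¹ • (v - w), σ⟫ := by
  rw [cosTheta, real_inner_smul_left, real_inner_comm]; ring

/-- The total scattering rate of a pair of distinct velocities is bounded when `Φ` is. -/
lemma kk_sigma_int {N : ℕ} {Φ b : ℝ → ℝ} {C B : ℝ} (hC : ∀ z : Rn N, Φ ‖z‖ ≤ C)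
    (hC0 : 0 ≤ C) (hb0 : ∀ x, 0 ≤ b x)
    (hB : ∀ u : Rn N, ‖u‖ = 1 → ∫⁻ σ, ENNReal.ofReal (b ⟪u, σ⟫) ∂(sphMeas N) = ENNReal.ofReal B)
    {v w : Rn N} (hvw : w ≠ v) :
    ∫⁻ σ, kk N Φ b v w σ ∂(sphMeas N) ≤ ENNReal.ofReal (C * B) := by
  have h0 : ‖v - w‖ ≠ 0 := norm_ne_zero_iff.2 (sub_ne_zero.2 hvw.symm)
  have hu : ‖‖v - w‖⁻¹ • (v - w)‖ = 1 := by
    rw [norm_smul, norm_inv, norm_norm, inv_mul_cancel₀ h0]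
  calc ∫⁻ σ, kk N Φ b v w σ ∂(sphMeas N)
      ≤ ∫⁻ σ, ENNReal.ofReal C * ENNReal.ofReal (b ⟪‖v - w‖⁻¹ • (v - w), σ⟫) ∂(sphMeas N) := by
        refine lintegral_mono fun σ => ?_
        rw [kk, cosTheta_eq, ← ENNReal.ofReal_mul hC0]
        exact ENNReal.ofReal_le_ofReal (mul_le_mul_of_nonneg_right (hC _) (hb0 _))
    _ = _ := by
        rw [lintegral_const_mul' _ _ ENNReal.ofReal_ne_top, hB _ hu, ENNReal.ofReal_mul hC0]

/-- The direction of a vector; it is arbitrary for the zero vector. -/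
lemma exists_dir {N : ℕ} [Nontrivial (Rn N)] (x : Rn N) : ∃ n : Rn N, ‖n‖ = 1 ∧ ‖x‖ • n = x := by
  by_cases hx : x = 0
  · obtain ⟨n, hn⟩ := exists_norm_eq (Rn N) (zero_le_one (α := ℝ))
    exact ⟨n, hn, by simp [hx]⟩
  · have h0 : ‖x‖ ≠ 0 := norm_ne_zero_iff.2 hx
    refine ⟨‖x‖⁻¹ • x, ?_, ?_⟩
    · rw [norm_smul, norm_inv, norm_norm, inv_mul_cancel₀ h0]
    · rw [smul_smul, mul_inv_cancel₀ h0, one_smul]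

lemma slice_ofReal {N : ℕ} {Φ b : ℝ → ℝ} (hΦ : Measurable Φ) (hb : Measurable b) (v w : Rn N) :
    Measurable fun σ : Rn N => kk N Φ b v w σ :=
  slice1 (G := fun x => kk N Φ b x.1 x.2.1 x.2.2) (kk_meas hΦ hb) v w

lemma vP_slice {N : ℕ} (v w : Rn N) : Measurable fun σ : Rn N => vP N v w σ := by
  unfold vP; fun_prop
lemma vSP_slice {N : ℕ} (v w : Rn N) : Measurable fun σ : Rn N => vSP N v w σ := by
  unfold vSP; fun_prop

/-- Povzner's inequality averaged over the scattering direction: the strictly negative term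
keeps the weight `br v ^ (p + γ/2)` because the kernel is bounded below by
`(1 + |v - w|) ^ γ`. -/
lemma povzner_int {N : ℕ} [Nontrivial (Rn N)] {Φ b : ℝ → ℝ} {γ p : ℝ}
    (hγ : -2 < γ) (hγ' : γ ≤ 0) (hp : 1 < p) (hΦ : Measurable Φ) (hb : Measurable b)
    {cΦ C b₀ B κ : ℝ} (hcΦ : 0 < cΦ) (hlow : ∀ z : Rn N, cΦ * (1 + ‖z‖) ^ γ ≤ Φ ‖z‖)
    (hC : ∀ z : Rn N, Φ ‖z‖ ≤ C) (hC0 : 0 ≤ C)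
    (hb₀ : 0 < b₀) (hbl : ∀ x, b₀ ≤ b x) (hκ : 0 < κ)
    (hB : ∀ u : Rn N, ‖u‖ = 1 → ∫⁻ σ, ENNReal.ofReal (b ⟪u, σ⟫) ∂(sphMeas N) = ENNReal.ofReal B)
    (hsin : ∀ u : Rn N, ‖u‖ = 1 →
      ∫⁻ σ, ENNReal.ofReal (1 - ⟪u, σ⟫ ^ 2) ∂(sphMeas N) = ENNReal.ofReal κ)
    {v w : Rn N} (hvw : w ≠ v) :
    ∫⁻ σ, kk N Φ b v w σ * ENNReal.ofReal (br (vP N v w σ) ^ p) ∂(sphMeas N) +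
      ∫⁻ σ, kk N Φ b v w σ * ENNReal.ofReal (br (vSP N v w σ) ^ p) ∂(sphMeas N) +
      ENNReal.ofReal (b₀ * cΦ * (1 - 2 * (1 / 2 : ℝ) ^ p) / 8 * κ) *
        (ENNReal.ofReal (br v ^ (p + γ / 2)) * ENNReal.ofReal (br w ^ (-1 : ℝ))) ≤
    ∫⁻ σ, kk N Φ b v w σ * ENNReal.ofReal (br v ^ p) ∂(sphMeas N) +
      ∫⁻ σ, kk N Φ b v w σ * ENNReal.ofReal (br w ^ p) ∂(sphMeas N) +
      ENNReal.ofReal (C * B * (p * 2 ^ (p - 1))) *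
        (ENNReal.ofReal (br v ^ (p - 1)) * ENNReal.ofReal (br w ^ (1 : ℝ)) +
          ENNReal.ofReal (br v ^ (1 : ℝ)) * ENNReal.ofReal (br w ^ (p - 1))) := by
  obtain ⟨n, hn1, hn⟩ := exists_dir (v + w)
  have hc := half_rpow_pos hp
  set c := 1 - 2 * (1 / 2 : ℝ) ^ p with hcdef
  have hd : 0 ≤ p * 2 ^ (p - 1) := by positivity
  set d := p * 2 ^ (p - 1) with hddef
  have hbv := br_pos v
  have hbw := br_pos w
  have hm : 0 ≤ br v ^ (p + γ / 2) * br w ^ (-1 : ℝ) := by positivity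
  set m := br v ^ (p + γ / 2) * br w ^ (-1 : ℝ) with hmdef
  have hZ : 0 ≤ br v ^ (p - 1) * br w + br w ^ (p - 1) * br v := by positivity
  set Z := br v ^ (p - 1) * br w + br w ^ (p - 1) * br v with hZdef
  have hkm := slice_ofReal hΦ hb v w
  have hb0 : ∀ x, 0 ≤ b x := fun x => hb₀.le.trans (hbl x)
  have ha : 0 ≤ b₀ * cΦ * c / 8 := by positivity
  have point : ∀ᵐ σ ∂(sphMeas N),
      kk N Φ b v w σ * ENNReal.ofReal (br (vP N v w σ) ^ p) +
      (kk N Φ b v w σ * ENNReal.ofReal (br (vSP N v w σ) ^ p) +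
      ENNReal.ofReal (b₀ * cΦ * c / 8 * m) * ENNReal.ofReal (1 - ⟪n, σ⟫ ^ 2)) ≤
      kk N Φ b v w σ * ENNReal.ofReal (br v ^ p) +
      (kk N Φ b v w σ * ENNReal.ofReal (br w ^ p) +
      kk N Φ b v w σ * ENNReal.ofReal (d * Z)) := by
    filter_upwards [sph_norm N] with σ hσ
    have hpv := povzner hp v w n hn hσ hn1
    rw [← hcdef, ← hddef, ← hZdef] at hpv
    have hS : 0 ≤ 1 - ⟪n, σ⟫ ^ 2 := by
      have := abs_real_inner_le_norm n σ
      rw [hn1, hσ, one_mul] at this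
      have := (sq_le_one_iff_abs_le_one _).2 this
      linarith
    have hwl := weight_lower hγ hγ' v w
    have hΦl := hlow (v - w)
    have hΦ1 : cΦ * (1 / 4 * (br v ^ (γ / 2) * br w ^ (-1 : ℝ))) ≤ Φ ‖v - w‖ :=
      (mul_le_mul_of_nonneg_left hwl hcΦ.le).trans hΦl
    have hΦ0 : 0 ≤ Φ ‖v - w‖ := le_trans (by positivity) hΦ1
    have hk1 : cΦ * (1 / 4 * (br v ^ (γ / 2) * br w ^ (-1 : ℝ))) * b₀ ≤
        Φ ‖v - w‖ * b (cosTheta N v w σ) :=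
      mul_le_mul hΦ1 (hbl _) hb₀.le hΦ0
    have hk0 : 0 ≤ Φ ‖v - w‖ * b (cosTheta N v w σ) := mul_nonneg hΦ0 (hb0 _)
    unfold kk
    set k := Φ ‖v - w‖ * b (cosTheta N v w σ)
    have hvp := br_pos (vP N v w σ)
    have hvsp := br_pos (vSP N v w σ)
    have hvp' : 0 ≤ br (vP N v w σ) ^ p := by positivity
    have hvsp' : 0 ≤ br (vSP N v w σ) ^ p := by positivity
    have hv' : 0 ≤ br v ^ p := by positivity
    have hw' : 0 ≤ br w ^ p := by positivity
    have hmm : m = br v ^ p * (br v ^ (γ / 2) * br w ^ (-1 : ℝ)) := by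
      rw [hmdef, Real.rpow_add hbv]; ring
    have hX : b₀ * cΦ * c / 8 * m * (1 - ⟪n, σ⟫ ^ 2) ≤
        k * (c / 2 * (1 - ⟪n, σ⟫ ^ 2) * (br v ^ p + br w ^ p)) := by
      have h1 : 0 ≤ c / 2 * (1 - ⟪n, σ⟫ ^ 2) * br v ^ p := by positivity
      have h2 : 0 ≤ k * (c / 2 * (1 - ⟪n, σ⟫ ^ 2) * br w ^ p) := by positivity
      have h3 := mul_le_mul_of_nonneg_right hk1 h1
      rw [hmm]
      linarith
    have hfin := mul_le_mul_of_nonneg_left hpv hk0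
    rw [← ENNReal.ofReal_mul hk0, ← ENNReal.ofReal_mul hk0, ← ENNReal.ofReal_mul hk0,
      ← ENNReal.ofReal_mul hk0, ← ENNReal.ofReal_mul hk0, ← ENNReal.ofReal_mul (by positivity),
      ← ENNReal.ofReal_add (by positivity) (by positivity),
      ← ENNReal.ofReal_add (by positivity) (by positivity),
      ← ENNReal.ofReal_add (by positivity) (by positivity),
      ← ENNReal.ofReal_add (by positivity) (by positivity)]
    exact ENNReal.ofReal_le_ofReal (by linarith)
  have hint := lintegral_mono_ae point
  have m1 : Measurable fun σ => kk N Φ b v w σ * ENNReal.ofReal (br (vP N v w σ) ^ p) :=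
    hkm.mul ((br_rpow_meas p).comp (vP_slice v w))
  have m2 : Measurable fun σ => kk N Φ b v w σ * ENNReal.ofReal (br (vSP N v w σ) ^ p) :=
    hkm.mul ((br_rpow_meas p).comp (vSP_slice v w))
  rw [lintegral_add_left m1, lintegral_add_left m2,
    lintegral_const_mul' _ _ ENNReal.ofReal_ne_top, hsin n hn1,
    lintegral_add_left (hkm.mul_const _), lintegral_add_left (hkm.mul_const _),
    lintegral_mul_const (ENNReal.ofReal (d * Z)) hkm, ← add_assoc, ← add_assoc] at hint
  have e1 : ENNReal.ofReal (b₀ * cΦ * c / 8 * m) * ENNReal.ofReal κ =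
      ENNReal.ofReal (b₀ * cΦ * c / 8 * κ) *
        (ENNReal.ofReal (br v ^ (p + γ / 2)) * ENNReal.ofReal (br w ^ (-1 : ℝ))) := by
    rw [← ENNReal.ofReal_mul (by positivity), ← ENNReal.ofReal_mul (by positivity),
      ← ENNReal.ofReal_mul (by positivity), hmdef]
    congr 1; ring
  have e2 : (∫⁻ σ, kk N Φ b v w σ ∂(sphMeas N)) * ENNReal.ofReal (d * Z) ≤
      ENNReal.ofReal (C * B * d) *
        (ENNReal.ofReal (br v ^ (p - 1)) * ENNReal.ofReal (br w ^ (1 : ℝ)) +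
          ENNReal.ofReal (br v ^ (1 : ℝ)) * ENNReal.ofReal (br w ^ (p - 1))) := by
    refine (mul_le_mul_left (kk_sigma_int hC hC0 hb0 hB hvw) _).trans (le_of_eq ?_)
    rw [ENNReal.ofReal_mul hd, ← mul_assoc, ← ENNReal.ofReal_mul' hd, hZdef,
      ENNReal.ofReal_add (by positivity) (by positivity), Real.rpow_one, Real.rpow_one,
      mul_comm (br w ^ (p - 1)), ENNReal.ofReal_mul hbv.le,
      ENNReal.ofReal_mul (by positivity : 0 ≤ br v ^ (p - 1))]
  rw [e1] at hint
  exact hint.trans (by gcongr)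

lemma prod_int {N : ℕ} {F g h : Rn N → ℝ≥0∞} (hF : Measurable F) (hg : Measurable g)
    (hh : Measurable h) :
    ∫⁻ v : Rn N, ∫⁻ w : Rn N, F w * F v * (g v * h w) =
      (∫⁻ v, F v * g v) * ∫⁻ w, F w * h w := by
  have m1 : Measurable fun v => F v * g v := hF.mul hg
  have m2 : Measurable fun v => F v * h v := hF.mul hh
  rw [← lintegral_mul_const _ m1]
  refine lintegral_congr fun v => ?_
  rw [← lintegral_const_mul _ m2]
  refine lintegral_congr fun w => ?_
  ring

/-- The gain term `Q⁺(F, F)(v)` of the collision operator, with values in `[0, ∞]`. -/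
def gain (N : ℕ) (Φ b : ℝ → ℝ) (F : Rn N → ℝ≥0∞) (v : Rn N) : ℝ≥0∞ :=
  ∫⁻ w : Rn N, ∫⁻ σ, kk N Φ b v w σ * (F (vSP N v w σ) * F (vP N v w σ)) ∂(sphMeas N)

/-- The loss term `Q⁻(F, F)(v)` of the collision operator, with values in `[0, ∞]`. -/
def loss (N : ℕ) (Φ b : ℝ → ℝ) (F : Rn N → ℝ≥0∞) (v : Rn N) : ℝ≥0∞ :=
  ∫⁻ w : Rn N, ∫⁻ σ, kk N Φ b v w σ * (F w * F v) ∂(sphMeas N)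

lemma double_add {N : ℕ} {G H : Rn N → Rn N → ℝ≥0∞}
    (hG : Measurable fun x : Rn N × Rn N => G x.1 x.2) :
    ∫⁻ v : Rn N, ∫⁻ w : Rn N, (G v w + H v w) =
    (∫⁻ v : Rn N, ∫⁻ w : Rn N, G v w) + ∫⁻ v : Rn N, ∫⁻ w : Rn N, H v w := by
  have m2 : Measurable fun v : Rn N => ∫⁻ w : Rn N, G v w := hG.lintegral_prod_right'
  rw [← lintegral_add_left m2]
  exact lintegral_congr fun v => lintegral_add_left (hG.comp measurable_prodMk_left) _

lemma sigma_meas {N : ℕ} [IsFiniteMeasure (sphMeas N)] {G : Rn N → Rn N → Rn N → ℝ≥0∞}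
    (hG : Measurable fun x : Rn N × Rn N × Rn N => G x.1 x.2.1 x.2.2) :
    Measurable fun x : Rn N × Rn N => ∫⁻ σ, G x.1 x.2 σ ∂(sphMeas N) := by
  have m0 : Measurable fun x : (Rn N × Rn N) × Rn N => G x.1.1 x.1.2 x.2 :=
    hG.comp (by fun_prop : Measurable fun x : (Rn N × Rn N) × Rn N => (x.1.1, x.1.2, x.2))
  exact m0.lintegral_prod_right'

/-- Moment inequality at a fixed time: the gain of moment is dominated by the loss, up to lower
order moments and with a coercive remainder of order `2p + γ`. -/
lemma kinetic {N : ℕ} [Nontrivial (Rn N)] [IsFiniteMeasure (sphMeas N)] {Φ b : ℝ → ℝ} {γ p : ℝ}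
    (hγ : -2 < γ) (hγ' : γ ≤ 0) (hp : 1 < p) (hΦ : Measurable Φ) (hb : Measurable b)
    {cΦ C b₀ B κ : ℝ} (hcΦ : 0 < cΦ) (hlow : ∀ z : Rn N, cΦ * (1 + ‖z‖) ^ γ ≤ Φ ‖z‖)
    (hC : ∀ z : Rn N, Φ ‖z‖ ≤ C) (hC0 : 0 ≤ C)
    (hb₀ : 0 < b₀) (hbl : ∀ x, b₀ ≤ b x) (hκ : 0 < κ)
    (hB : ∀ u : Rn N, ‖u‖ = 1 → ∫⁻ σ, ENNReal.ofReal (b ⟪u, σ⟫) ∂(sphMeas N) = ENNReal.ofReal B)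
    (hsin : ∀ u : Rn N, ‖u‖ = 1 →
      ∫⁻ σ, ENNReal.ofReal (1 - ⟪u, σ⟫ ^ 2) ∂(sphMeas N) = ENNReal.ofReal κ)
    {F : Rn N → ℝ≥0∞} (hF : Measurable F) (hFt : ∀ v, F v ≠ ⊤) :
    2 * (∫⁻ v : Rn N, gain N Φ b F v * ENNReal.ofReal (br v ^ p)) +
      ENNReal.ofReal (b₀ * cΦ * (1 - 2 * (1 / 2 : ℝ) ^ p) / 8 * κ) *
        (mom F (p + γ / 2) * mom F (-1)) ≤
    2 * (∫⁻ v : Rn N, loss N Φ b F v * ENNReal.ofReal (br v ^ p)) +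
      ENNReal.ofReal (C * B * (p * 2 ^ (p - 1))) *
        (mom F (p - 1) * mom F 1 + mom F 1 * mom F (p - 1)) := by
  have hψ := br_rpow_meas (N := N) p
  have hk := kk_meas (N := N) hΦ hb
  have mP : Measurable fun x : Rn N × Rn N × Rn N => kk N Φ b x.1 x.2.1 x.2.2 * (F x.2.1 * F x.1) :=
    hk.mul ((hF.comp (by fun_prop)).mul (hF.comp (by fun_prop)))
  have mA : Measurable fun x : Rn N × Rn N × Rn N => kk N Φ b x.1 x.2.1 x.2.2 * (F x.2.1 * F x.1) *
      ENNReal.ofReal (br (vP N x.1 x.2.1 x.2.2) ^ p) := mP.mul (hψ.comp vP_cont.measurable)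
  have mD : Measurable fun x : Rn N × Rn N × Rn N => kk N Φ b x.1 x.2.1 x.2.2 * (F x.2.1 * F x.1) *
      ENNReal.ofReal (br x.1 ^ p) := mP.mul (hψ.comp (by fun_prop))
  have eA : ∫⁻ v : Rn N, gain N Φ b F v * ENNReal.ofReal (br v ^ p) =
      ∫⁻ v : Rn N, ∫⁻ w : Rn N, ∫⁻ σ, kk N Φ b v w σ * (F w * F v) *
        ENNReal.ofReal (br (vP N v w σ) ^ p) ∂(sphMeas N) := gain_weak hΦ hb hF hψ
  have eA' : ∫⁻ v : Rn N, gain N Φ b F v * ENNReal.ofReal (br v ^ p) =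
      ∫⁻ v : Rn N, ∫⁻ w : Rn N, ∫⁻ σ, kk N Φ b v w σ * (F w * F v) *
        ENNReal.ofReal (br (vSP N v w σ) ^ p) ∂(sphMeas N) :=
    eA.trans (gain_sym hΦ hb hF hψ).symm
  have eD : ∫⁻ v : Rn N, loss N Φ b F v * ENNReal.ofReal (br v ^ p) =
      ∫⁻ v : Rn N, ∫⁻ w : Rn N, ∫⁻ σ, kk N Φ b v w σ * (F w * F v) *
        ENNReal.ofReal (br v ^ p) ∂(sphMeas N) := by
    refine lintegral_congr fun v => ?_
    rw [loss, ← lintegral_mul_const _ (slice_int mP v)]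
    refine lintegral_congr fun w => ?_
    rw [← lintegral_mul_const _ (slice1 mP v w)]
  have eD' : ∫⁻ v : Rn N, loss N Φ b F v * ENNReal.ofReal (br v ^ p) =
      ∫⁻ v : Rn N, ∫⁻ w : Rn N, ∫⁻ σ, kk N Φ b v w σ * (F w * F v) *
        ENNReal.ofReal (br w ^ p) ∂(sphMeas N) :=
    eD.trans (loss_sym hΦ hb hF hψ).symm
  have hne : ∀ v : Rn N, ∀ᵐ w : Rn N, w ≠ v := fun v => by simp [ae_iff]
  set a := ENNReal.ofReal (b₀ * cΦ * (1 - 2 * (1 / 2 : ℝ) ^ p) / 8 * κ)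
  set d := ENNReal.ofReal (C * B * (p * 2 ^ (p - 1)))
  have pull : ∀ (v w : Rn N) (g : Rn N → ℝ≥0∞),
      ∫⁻ σ, kk N Φ b v w σ * (F w * F v) * g σ ∂(sphMeas N) =
      F w * F v * ∫⁻ σ, kk N Φ b v w σ * g σ ∂(sphMeas N) := by
    intro v w g
    rw [← lintegral_const_mul' _ _ (ENNReal.mul_ne_top (hFt w) (hFt v))]
    exact lintegral_congr fun σ => by ring
  have hmain : ∫⁻ v : Rn N, ∫⁻ w : Rn N,
      ((∫⁻ σ, kk N Φ b v w σ * (F w * F v) * ENNReal.ofReal (br (vP N v w σ) ^ p) ∂(sphMeas N)) +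
      (∫⁻ σ, kk N Φ b v w σ * (F w * F v) * ENNReal.ofReal (br (vSP N v w σ) ^ p) ∂(sphMeas N)) +
      a * (F w * F v * (ENNReal.ofReal (br v ^ (p + γ / 2)) * ENNReal.ofReal (br w ^ (-1 : ℝ))))) ≤
    ∫⁻ v : Rn N, ∫⁻ w : Rn N,
      ((∫⁻ σ, kk N Φ b v w σ * (F w * F v) * ENNReal.ofReal (br v ^ p) ∂(sphMeas N)) +
      (∫⁻ σ, kk N Φ b v w σ * (F w * F v) * ENNReal.ofReal (br w ^ p) ∂(sphMeas N)) +
      d * (F w * F v * (ENNReal.ofReal (br v ^ (p - 1)) * ENNReal.ofReal (br w ^ (1 : ℝ))) +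
        F w * F v * (ENNReal.ofReal (br v ^ (1 : ℝ)) * ENNReal.ofReal (br w ^ (p - 1))))) := by
    refine lintegral_mono fun v => lintegral_mono_ae ?_
    filter_upwards [hne v] with w hw
    have h := mul_le_mul_right
      (povzner_int hγ hγ' hp hΦ hb hcΦ hlow hC hC0 hb₀ hbl hκ hB hsin hw) (F w * F v)
    rw [pull, pull, pull, pull]
    refine le_trans (le_of_eq ?_) (h.trans (le_of_eq ?_)) <;> ring
  have mB : Measurable fun x : Rn N × Rn N × Rn N => kk N Φ b x.1 x.2.1 x.2.2 * (F x.2.1 * F x.1) *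
      ENNReal.ofReal (br (vSP N x.1 x.2.1 x.2.2) ^ p) := mP.mul (hψ.comp vSP_cont.measurable)
  have mE : Measurable fun x : Rn N × Rn N × Rn N => kk N Φ b x.1 x.2.1 x.2.2 * (F x.2.1 * F x.1) *
      ENNReal.ofReal (br x.2.1 ^ p) := mP.mul (hψ.comp (by fun_prop))
  have sA := sigma_meas (G := fun v w σ => kk N Φ b v w σ * (F w * F v) *
    ENNReal.ofReal (br (vP N v w σ) ^ p)) mA
  have sB := sigma_meas (G := fun v w σ => kk N Φ b v w σ * (F w * F v) *
    ENNReal.ofReal (br (vSP N v w σ) ^ p)) mB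
  have sD := sigma_meas (G := fun v w σ => kk N Φ b v w σ * (F w * F v) *
    ENNReal.ofReal (br v ^ p)) mD
  have sE := sigma_meas (G := fun v w σ => kk N Φ b v w σ * (F w * F v) *
    ENNReal.ofReal (br w ^ p)) mE
  have mQ : ∀ r q : ℝ, Measurable fun x : Rn N × Rn N =>
      F x.2 * F x.1 * (ENNReal.ofReal (br x.1 ^ r) * ENNReal.ofReal (br x.2 ^ q)) := fun r q =>
    ((hF.comp measurable_snd).mul (hF.comp measurable_fst)).mul
      (((br_rpow_meas r).comp measurable_fst).mul ((br_rpow_meas q).comp measurable_snd))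
  have iQ : ∀ r q : ℝ, ∫⁻ v : Rn N, ∫⁻ w : Rn N,
      F w * F v * (ENNReal.ofReal (br v ^ r) * ENNReal.ofReal (br w ^ q)) =
      mom F r * mom F q := fun r q => prod_int hF (br_rpow_meas r) (br_rpow_meas q)
  have double_const : ∀ (c : ℝ≥0∞), c ≠ ⊤ → ∀ G : Rn N → Rn N → ℝ≥0∞,
      ∫⁻ v : Rn N, ∫⁻ w : Rn N, c * G v w = c * ∫⁻ v : Rn N, ∫⁻ w : Rn N, G v w := by
    intro c hc G
    rw [← lintegral_const_mul' _ _ hc]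
    exact lintegral_congr fun v => lintegral_const_mul' _ _ hc
  rw [double_add (sA.add sB), double_add sA, double_add (sD.add sE), double_add sD,
    double_const a ENNReal.ofReal_ne_top, double_const d ENNReal.ofReal_ne_top,
    double_add (mQ _ _), iQ, iQ, iQ, ← eA, ← eA', ← eD, ← eD', ← two_mul, ← two_mul] at hmain
  exact hmain

/-! ### The collision operator at a fixed time -/

lemma mom_mono {N : ℕ} (F : Rn N → ℝ≥0∞) {r q : ℝ} (h : r ≤ q) : mom F r ≤ mom F q :=
  lintegral_mono fun v => mul_le_mul_right
    (ENNReal.ofReal_le_ofReal (Real.rpow_le_rpow_of_exponent_le (one_le_br v) h)) _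

lemma L1s_eq_mom {N : ℕ} {f : Rn N → ℝ} (hf : ∀ v, 0 ≤ f v) {s r : ℝ} (h : s / 2 = r) :
    L1s N s f = mom (fun v => ENNReal.ofReal (f v)) r := by
  refine lintegral_congr fun v => ?_
  rw [abs_of_nonneg (hf v), h, ENNReal.ofReal_mul (hf v), br]

lemma mass_energy_int {N : ℕ} {f : Rn N → ℝ} (hf : ∀ v, 0 ≤ f v) (hm : Measurable f)
    (h2 : L1s N 2 f < ⊤) :
    Integrable f ∧ Integrable (fun v => f v * ‖v‖ ^ 2) ∧ Integrable (fun v => f v * br v) := by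
  have hi : Integrable (fun v => f v * br v) := by
    refine ⟨(hm.mul br_cont.measurable).aestronglyMeasurable, ?_⟩
    rw [hasFiniteIntegral_iff_ofReal (ae_of_all _ fun v => mul_nonneg (hf v) (br_pos v).le)]
    refine lt_of_eq_of_lt (lintegral_congr fun v => ?_) h2
    rw [abs_of_nonneg (hf v), br]
    norm_num
  refine ⟨hi.mono' hm.aestronglyMeasurable (ae_of_all _ fun v => ?_),
    hi.mono' (hm.mul (by fun_prop)).aestronglyMeasurable (ae_of_all _ fun v => ?_), hi⟩
  · rw [Real.norm_of_nonneg (hf v)]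
    exact le_mul_of_one_le_right (hf v) (one_le_br v)
  · rw [Real.norm_of_nonneg (mul_nonneg (hf v) (by positivity))]
    refine mul_le_mul_of_nonneg_left ?_ (hf v)
    unfold br; linarith

/-- The moment of order two is the sum of mass and energy. -/
lemma mom_one {N : ℕ} {f : Rn N → ℝ} {ρ E : ℝ} (hf : ∀ v, 0 ≤ f v) (hm : Measurable f)
    (h2 : L1s N 2 f < ⊤) (hρ : ∫ v, f v = ρ) (hE : ∫ v, f v * ‖v‖ ^ 2 = E) :
    mom (fun v => ENNReal.ofReal (f v)) 1 = ENNReal.ofReal (ρ + E) := by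
  obtain ⟨i0, i1, i2⟩ := mass_energy_int hf hm h2
  have h3 : ∫ v, f v * br v = ρ + E := by
    rw [← hρ, ← hE, ← integral_add i0 i1]
    exact integral_congr_ae (ae_of_all _ fun v => by simp only [br]; ring)
  rw [← h3, ofReal_integral_eq_lintegral_ofReal i2
    (ae_of_all _ fun v => mul_nonneg (hf v) (br_pos v).le)]
  refine lintegral_congr fun v => ?_
  rw [Real.rpow_one, ENNReal.ofReal_mul (hf v)]

/-- The moment of order `-2` is bounded below in terms of mass and energy (by Jensen's inequality
for `x ↦ x⁻¹`). The bound is multiplied by another moment of `f` so that it also holds when the mass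
vanishes, in which case all moments do. -/
lemma exists_mom_lower (N : ℕ) (ρ E : ℝ) : ∃ l : ℝ, 0 < l ∧ ∀ f : Rn N → ℝ, (∀ v, 0 ≤ f v) →
    Measurable f → L1s N 2 f < ⊤ → ∫ v, f v = ρ → ∫ v, f v * ‖v‖ ^ 2 = E → ∀ r : ℝ,
    ENNReal.ofReal l * mom (fun v => ENNReal.ofReal (f v)) r ≤
      mom (fun v => ENNReal.ofReal (f v)) r * mom (fun v => ENNReal.ofReal (f v)) (-1) := by
  by_cases h : 0 < ρ ∧ 0 ≤ E
  · obtain ⟨h0, hE0⟩ := h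
    have hS : 0 < ρ + E := by linarith
    refine ⟨ρ ^ 2 / (ρ + E), by positivity, fun f hf hm h2 hρ hE r => ?_⟩
    rw [mul_comm]
    refine mul_le_mul_right ?_ _
    obtain ⟨i0, i1, i2⟩ := mass_energy_int hf hm h2
    have i3 : Integrable (fun v => f v * br v ^ (-1 : ℝ)) := by
      refine i0.mono' (hm.mul (br_cont.measurable.pow_const _)).aestronglyMeasurable
        (ae_of_all _ fun v => ?_)
      have := br_pos v
      rw [Real.norm_of_nonneg (mul_nonneg (hf v) (by positivity))]
      exact mul_le_of_le_one_right (hf v)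
        (Real.rpow_le_one_of_one_le_of_nonpos (one_le_br v) (by norm_num))
    have h3 : ∫ v, f v * br v = ρ + E := by
      rw [← hρ, ← hE, ← integral_add i0 i1]
      exact integral_congr_ae (ae_of_all _ fun v => by simp only [br]; ring)
    have e : mom (fun v => ENNReal.ofReal (f v)) (-1) =
        ENNReal.ofReal (∫ v, f v * br v ^ (-1 : ℝ)) := by
      rw [ofReal_integral_eq_lintegral_ofReal i3 (ae_of_all _ fun v =>
        mul_nonneg (hf v) (Real.rpow_nonneg (br_pos v).le _))]
      exact lintegral_congr fun v => (ENNReal.ofReal_mul (hf v)).symm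
    rw [e]
    refine ENNReal.ofReal_le_ofReal ?_
    set a := ρ / (ρ + E) with ha
    -- the tangent line of `x ↦ x⁻¹` at `x = a⁻¹`, the mean of `br` under `f / ρ`
    calc ρ ^ 2 / (ρ + E) = 2 * a * ρ - a ^ 2 * (ρ + E) := by rw [ha]; field_simp; ring
      _ = ∫ v, (2 * a * f v - a ^ 2 * (f v * br v)) := by
          rw [integral_sub (i0.const_mul _) (i2.const_mul _), integral_const_mul,
            integral_const_mul, hρ, h3]
      _ ≤ ∫ v, f v * br v ^ (-1 : ℝ) := by
          refine integral_mono ((i0.const_mul _).sub (i2.const_mul _)) i3 fun v => ?_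
          have hb := br_pos v
          have : 2 * a - a ^ 2 * br v ≤ br v ^ (-1 : ℝ) := by
            rw [Real.rpow_neg_one, inv_eq_one_div, le_div_iff₀ hb]
            nlinarith [sq_nonneg (a * br v - 1)]
          have := mul_le_mul_of_nonneg_left this (hf v)
          simp only
          linarith
  · refine ⟨1, one_pos, fun f hf hm h2 hρ hE r => ?_⟩
    have hρ0 : 0 ≤ ρ := hρ ▸ integral_nonneg hf
    have hE0 : 0 ≤ E := hE ▸ integral_nonneg fun v => mul_nonneg (hf v) (by positivity)
    have hz : ρ = 0 := by
      by_contra hne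
      exact h ⟨lt_of_le_of_ne hρ0 (Ne.symm hne), hE0⟩
    obtain ⟨i0, -, -⟩ := mass_energy_int hf hm h2
    have hz' : f =ᵐ[volume] 0 := (integral_eq_zero_iff_of_nonneg hf i0).1 (hρ.trans hz)
    have : mom (fun v => ENNReal.ofReal (f v)) r = 0 := by
      refine (lintegral_congr_ae ?_).trans lintegral_zero
      filter_upwards [hz'] with v hv
      simp [hv]
    simp [this]

/-- The loss term is controlled by moments of `F`, the total scattering rate being bounded. -/
lemma loss_le {N : ℕ} [Nontrivial (Rn N)] [IsFiniteMeasure (sphMeas N)] {Φ b : ℝ → ℝ} {C B : ℝ}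
    (hC : ∀ z : Rn N, Φ ‖z‖ ≤ C)
    (hC0 : 0 ≤ C) (hb0 : ∀ x, 0 ≤ b x)
    (hB : ∀ u : Rn N, ‖u‖ = 1 → ∫⁻ σ, ENNReal.ofReal (b ⟪u, σ⟫) ∂(sphMeas N) = ENNReal.ofReal B)
    {F : Rn N → ℝ≥0∞} (hF : Measurable F) (hFt : ∀ v, F v ≠ ⊤) (r : ℝ) :
    ∫⁻ v : Rn N, loss N Φ b F v * ENNReal.ofReal (br v ^ r) ≤
      ENNReal.ofReal (C * B) * (mom F r * mom F 0) := by
  have h1 : ∀ v : Rn N, loss N Φ b F v ≤ ENNReal.ofReal (C * B) * F v * mom F 0 := by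
    intro v
    have hne : ∀ᵐ w : Rn N, w ≠ v := by simp [ae_iff]
    rw [mom, ← lintegral_const_mul' _ _ (ENNReal.mul_ne_top ENNReal.ofReal_ne_top (hFt v))]
    refine lintegral_mono_ae ?_
    filter_upwards [hne] with w hw
    rw [lintegral_mul_const' _ _ (ENNReal.mul_ne_top (hFt w) (hFt v))]
    refine (mul_le_mul_left (kk_sigma_int hC hC0 hb0 hB hw) _).trans (le_of_eq ?_)
    simp only [Real.rpow_zero, ENNReal.ofReal_one]
    ring
  have m1 : Measurable fun v => F v * ENNReal.ofReal (br v ^ r) := hF.mul (br_rpow_meas r)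
  calc ∫⁻ v : Rn N, loss N Φ b F v * ENNReal.ofReal (br v ^ r)
      ≤ ∫⁻ v : Rn N, ENNReal.ofReal (C * B) * mom F 0 * (F v * ENNReal.ofReal (br v ^ r)) :=
        lintegral_mono fun v => (mul_le_mul_left (h1 v) _).trans (le_of_eq (by ring))
    _ = _ := by
        rw [lintegral_const_mul _ m1, mom]
        simp only [mom]
        ring

/-- The moment inequality for the collision operator at a fixed time, with constants depending on
the solution only through its mass and energy, together with a bound of the loss by the square of
the moment of order `s`. The angular kernel is a Borel function `b'`. -/
lemma fixed_time {N : ℕ} (hN : 2 ≤ N) {s : ℝ} (hs : 2 < s) {Φ b : ℝ → ℝ} {γ : ℝ}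
    (hK : KernelOK N Φ b γ) (ρ E : ℝ) {b' : ℝ → ℝ} (hb' : Measurable b') {b₀ B : ℝ}
    (hb₀ : 0 < b₀) (hbl : ∀ x, b₀ ≤ b' x) (hB0 : 0 ≤ B)
    (hB : ∀ u : Rn N, ‖u‖ = 1 →
      ∫⁻ σ, ENNReal.ofReal (b' ⟪u, σ⟫) ∂(sphMeas N) = ENNReal.ofReal B) :
    ∃ C₂ K₀ C₃ : ℝ, 0 < C₂ ∧ 0 < K₀ ∧ ∀ f : Rn N → ℝ, (∀ v, 0 ≤ f v) → Measurable f →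
      L1s N 2 f < ⊤ → ∫ v, f v = ρ → ∫ v, f v * ‖v‖ ^ 2 = E →
      (∫⁻ v : Rn N, gain N Φ b' (fun x => ENNReal.ofReal (f x)) v *
          ENNReal.ofReal (br v ^ (s / 2))) + ENNReal.ofReal K₀ * L1s N (s + γ) f ≤
        (∫⁻ v : Rn N, loss N Φ b' (fun x => ENNReal.ofReal (f x)) v *
          ENNReal.ofReal (br v ^ (s / 2))) + ENNReal.ofReal C₂ * L1s N (s - 2) f ∧
      ∫⁻ v : Rn N, loss N Φ b' (fun x => ENNReal.ofReal (f x)) v *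
          ENNReal.ofReal (br v ^ (s / 2)) ≤ ENNReal.ofReal C₃ * (L1s N s f * L1s N s f) := by
  have : Nontrivial (Rn N) := by
    have : Nonempty (Fin N) := ⟨⟨0, by omega⟩⟩
    infer_instance
  have := sph_finite hN hK
  obtain ⟨κ, hκ, hsin⟩ := sph_sin_sq (N := N) hN
  obtain ⟨cΦ, C, hcΦ, hC0, hbd⟩ := hK.phi_bounds
  obtain ⟨hγ, hγ'⟩ := hK.gamma_mem
  obtain ⟨l, hl, hlow⟩ := exists_mom_lower N ρ E
  have hp : 1 < s / 2 := by linarith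
  have hΦ : Measurable Φ := hK.phi_smooth.continuous.measurable
  have hC : ∀ z : Rn N, Φ ‖z‖ ≤ C := fun z => (hbd z).2.trans
    (mul_le_of_le_one_right hC0.le
      (Real.rpow_le_one_of_one_le_of_nonpos (by linarith [norm_nonneg z]) hγ'))
  have hb0 : ∀ x, 0 ≤ b' x := fun x => hb₀.le.trans (hbl x)
  have hc := half_rpow_pos hp
  set a := b₀ * cΦ * (1 - 2 * (1 / 2 : ℝ) ^ (s / 2)) / 8 * κ with ha
  have ha0 : 0 < a := by positivity
  set d := C * B * (s / 2 * 2 ^ (s / 2 - 1)) with hd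
  have hd0 : 0 ≤ d := by positivity
  refine ⟨d * |ρ + E| + 1, a / 2 * l, C * B, by positivity, by positivity,
    fun f hf hm h2 hρ hE => ?_⟩
  have hF : Measurable fun x => ENNReal.ofReal (f x) := hm.ennreal_ofReal
  have hFt : ∀ v, ENNReal.ofReal (f v) ≠ ⊤ := fun v => ENNReal.ofReal_ne_top
  have hkin := kinetic hγ hγ' hp hΦ hb' hcΦ (fun z => (hbd z).1) hC hC0.le hb₀ hbl hκ hB hsin
    hF hFt
  rw [L1s_eq_mom hf (rfl : s / 2 = s / 2),
    L1s_eq_mom hf (by ring : (s + γ) / 2 = s / 2 + γ / 2),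
    L1s_eq_mom hf (by ring : (s - 2) / 2 = s / 2 - 1)]
  rw [← ha, ← hd] at hkin
  refine ⟨?_, ?_⟩
  · have h3 := hlow f hf hm h2 hρ hE (s / 2 + γ / 2)
    rw [mom_one hf hm h2 hρ hE] at hkin
    set F := fun x => ENNReal.ofReal (f x)
    have t : (2 : ℝ≥0∞) = ENNReal.ofReal 2 := by simp
    have h4 : 2 * (ENNReal.ofReal (a / 2 * l) * mom F (s / 2 + γ / 2)) ≤
        ENNReal.ofReal a * (mom F (s / 2 + γ / 2) * mom F (-1)) := by
      refine le_trans (le_of_eq ?_) (mul_le_mul_right h3 _)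
      rw [t, ← mul_assoc, ← mul_assoc, ← ENNReal.ofReal_mul (by norm_num),
        ← ENNReal.ofReal_mul ha0.le]
      congr 2; ring
    have h5 : ENNReal.ofReal d * (mom F (s / 2 - 1) * ENNReal.ofReal (ρ + E) +
        ENNReal.ofReal (ρ + E) * mom F (s / 2 - 1)) ≤
        2 * (ENNReal.ofReal (d * |ρ + E| + 1) * mom F (s / 2 - 1)) := by
      have h6 : ENNReal.ofReal d * ENNReal.ofReal (ρ + E) ≤ ENNReal.ofReal (d * |ρ + E| + 1) := by
        rw [← ENNReal.ofReal_mul hd0]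
        refine ENNReal.ofReal_le_ofReal ?_
        have := mul_le_mul_of_nonneg_left (le_abs_self (ρ + E)) hd0
        linarith
      calc _ = 2 * ((ENNReal.ofReal d * ENNReal.ofReal (ρ + E)) * mom F (s / 2 - 1)) := by ring
        _ ≤ _ := mul_le_mul_right (mul_le_mul_left h6 _) _
    have h7 := (add_le_add_right h4 _).trans (hkin.trans (add_le_add_right h5 _))
    rw [← mul_add, ← mul_add] at h7
    exact (ENNReal.mul_le_mul_iff_right (by simp) (by simp)).1 h7
  · refine (loss_le hC hC0.le hb0 hB hF hFt (s / 2)).trans ?_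
    exact mul_le_mul_right (mul_le_mul_right (mom_mono _ (by linarith)) _) _

/-! ### Time integration -/

/-- Changing the angular kernel on a null set of directions does not change `Q`. -/
lemma Qop_congr {N : ℕ} [Nontrivial (Rn N)] {Φ b b' : ℝ → ℝ}
    (h : ∀ u : Rn N, ‖u‖ = 1 → ∀ᵐ σ ∂(sphMeas N), b ⟪u, σ⟫ = b' ⟪u, σ⟫) (g f : Rn N → ℝ)
    (v : Rn N) : Qop N Φ b g f v = Qop N Φ b' g f v := by
  have hne : ∀ᵐ w : Rn N, w ≠ v := by simp [ae_iff]
  refine integral_congr_ae ?_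
  filter_upwards [hne] with w hw
  have h0 : ‖v - w‖ ≠ 0 := norm_ne_zero_iff.2 (sub_ne_zero.2 hw.symm)
  have hu : ‖‖v - w‖⁻¹ • (v - w)‖ = 1 := by
    rw [norm_smul, norm_inv, norm_norm, inv_mul_cancel₀ h0]
  refine integral_congr_ae ?_
  filter_upwards [h _ hu] with σ hσ
  rw [cosTheta_eq, hσ]

/-- The signed integral defining `Q` is the difference of gain and loss wherever both are finite. -/
lemma Qop_eq {N : ℕ} [IsFiniteMeasure (sphMeas N)] {Φ b : ℝ → ℝ} (hΦ : Measurable Φ)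
    (hb : Measurable b) (hΦ0 : ∀ z : Rn N, 0 ≤ Φ ‖z‖) (hb0 : ∀ x, 0 ≤ b x) {f : Rn N → ℝ}
    (hf : ∀ v, 0 ≤ f v) (hm : Measurable f) {v : Rn N}
    (hG : gain N Φ b (fun x => ENNReal.ofReal (f x)) v < ⊤)
    (hL : loss N Φ b (fun x => ENNReal.ofReal (f x)) v < ⊤) :
    Qop N Φ b f f v = (gain N Φ b (fun x => ENNReal.ofReal (f x)) v).toReal -
      (loss N Φ b (fun x => ENNReal.ofReal (f x)) v).toReal := by
  let k : Rn N × Rn N → ℝ := fun y => Φ ‖v - y.1‖ * b (cosTheta N v y.1 y.2)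
  have mc : Measurable fun y : Rn N × Rn N => cosTheta N v y.1 y.2 :=
    (cosTheta_meas.comp (measurable_prodMk_left (x := v)) :)
  have mvP : Measurable fun y : Rn N × Rn N => vP N v y.1 y.2 :=
    (vP_cont.measurable.comp (measurable_prodMk_left (x := v)) :)
  have mvSP : Measurable fun y : Rn N × Rn N => vSP N v y.1 y.2 :=
    (vSP_cont.measurable.comp (measurable_prodMk_left (x := v)) :)
  have mk : Measurable k := (hΦ.comp (by fun_prop)).mul (hb.comp mc :)
  have k0 : ∀ y, 0 ≤ k y := fun y => mul_nonneg (hΦ0 _) (hb0 _)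
  let g₁ : Rn N × Rn N → ℝ := fun y => k y * (f (vSP N v y.1 y.2) * f (vP N v y.1 y.2))
  let g₂ : Rn N × Rn N → ℝ := fun y => k y * (f y.1 * f v)
  have m₁ : Measurable g₁ := mk.mul ((hm.comp mvSP :).mul (hm.comp mvP :))
  have m₂ : Measurable g₂ := mk.mul ((hm.comp measurable_fst :).mul_const _)
  have p₁ : ∀ y, 0 ≤ g₁ y := fun y => mul_nonneg (k0 y) (mul_nonneg (hf _) (hf _))
  have p₂ : ∀ y, 0 ≤ g₂ y := fun y => mul_nonneg (k0 y) (mul_nonneg (hf _) (hf _))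
  have e₁ : ∫⁻ y, ENNReal.ofReal (g₁ y) ∂((volume : Measure (Rn N)).prod (sphMeas N)) =
      gain N Φ b (fun x => ENNReal.ofReal (f x)) v := by
    rw [lintegral_prod _ m₁.ennreal_ofReal.aemeasurable]
    refine lintegral_congr fun w => lintegral_congr fun σ => ?_
    simp only [g₁]
    rw [ENNReal.ofReal_mul (k0 _), ENNReal.ofReal_mul (hf _), kk]
  have e₂ : ∫⁻ y, ENNReal.ofReal (g₂ y) ∂((volume : Measure (Rn N)).prod (sphMeas N)) =
      loss N Φ b (fun x => ENNReal.ofReal (f x)) v := by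
    rw [lintegral_prod _ m₂.ennreal_ofReal.aemeasurable]
    refine lintegral_congr fun w => lintegral_congr fun σ => ?_
    simp only [g₂]
    rw [ENNReal.ofReal_mul (k0 _), ENNReal.ofReal_mul (hf _), kk]
  have i₁ : Integrable g₁ ((volume : Measure (Rn N)).prod (sphMeas N)) :=
    ⟨m₁.aestronglyMeasurable, by
      rw [hasFiniteIntegral_iff_ofReal (ae_of_all _ p₁), e₁]; exact hG⟩
  have i₂ : Integrable g₂ ((volume : Measure (Rn N)).prod (sphMeas N)) :=
    ⟨m₂.aestronglyMeasurable, by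
      rw [hasFiniteIntegral_iff_ofReal (ae_of_all _ p₂), e₂]; exact hL⟩
  rw [← e₁, ← e₂, ← integral_eq_lintegral_of_nonneg_ae (ae_of_all _ p₁) m₁.aestronglyMeasurable,
    ← integral_eq_lintegral_of_nonneg_ae (ae_of_all _ p₂) m₂.aestronglyMeasurable,
    ← integral_sub i₁ i₂, integral_prod (fun y => g₁ y - g₂ y) (i₁.sub i₂)]
  refine integral_congr_ae (ae_of_all _ fun w => integral_congr_ae (ae_of_all _ fun σ => ?_))
  simp only [g₁, g₂, k]
  ring

lemma gain_meas {N : ℕ} [IsFiniteMeasure (sphMeas N)] {Φ b : ℝ → ℝ} (hΦ : Measurable Φ)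
    (hb : Measurable b) {F : ℝ → Rn N → ℝ≥0∞} (hF : Measurable (Function.uncurry F)) :
    Measurable fun x : ℝ × Rn N => gain N Φ b (F x.1) x.2 := by
  have q : Measurable fun z : ((ℝ × Rn N) × Rn N) × Rn N => (z.1.1.2, z.1.2, z.2) := by fun_prop
  have a0 : Measurable fun z : ((ℝ × Rn N) × Rn N) × Rn N => z.1.1.1 := by fun_prop
  have a1 : Measurable fun z : ((ℝ × Rn N) × Rn N) × Rn N => vSP N z.1.1.2 z.1.2 z.2 :=
    (vSP_cont.measurable.comp q :)
  have a2 : Measurable fun z : ((ℝ × Rn N) × Rn N) × Rn N => vP N z.1.1.2 z.1.2 z.2 :=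
    (vP_cont.measurable.comp q :)
  have a3 : Measurable fun z : ((ℝ × Rn N) × Rn N) × Rn N => kk N Φ b z.1.1.2 z.1.2 z.2 :=
    ((kk_meas hΦ hb).comp q :)
  have b1 : Measurable fun z : ((ℝ × Rn N) × Rn N) × Rn N => F z.1.1.1 (vSP N z.1.1.2 z.1.2 z.2) :=
    (hF.comp (a0.prodMk a1) :)
  have b2 : Measurable fun z : ((ℝ × Rn N) × Rn N) × Rn N => F z.1.1.1 (vP N z.1.1.2 z.1.2 z.2) :=
    (hF.comp (a0.prodMk a2) :)
  have c : Measurable fun z : ((ℝ × Rn N) × Rn N) × Rn N => kk N Φ b z.1.1.2 z.1.2 z.2 *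
      (F z.1.1.1 (vSP N z.1.1.2 z.1.2 z.2) * F z.1.1.1 (vP N z.1.1.2 z.1.2 z.2)) :=
    a3.mul (b1.mul b2)
  have d : Measurable fun z : (ℝ × Rn N) × Rn N => ∫⁻ σ, kk N Φ b z.1.2 z.2 σ *
      (F z.1.1 (vSP N z.1.2 z.2 σ) * F z.1.1 (vP N z.1.2 z.2 σ)) ∂(sphMeas N) :=
    c.lintegral_prod_right'
  exact d.lintegral_prod_right'

lemma loss_meas {N : ℕ} [IsFiniteMeasure (sphMeas N)] {Φ b : ℝ → ℝ} (hΦ : Measurable Φ)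
    (hb : Measurable b) {F : ℝ → Rn N → ℝ≥0∞} (hF : Measurable (Function.uncurry F)) :
    Measurable fun x : ℝ × Rn N => loss N Φ b (F x.1) x.2 := by
  have q : Measurable fun z : ((ℝ × Rn N) × Rn N) × Rn N => (z.1.1.2, z.1.2, z.2) := by fun_prop
  have a1 : Measurable fun z : ((ℝ × Rn N) × Rn N) × Rn N => (z.1.1.1, z.1.2) := by fun_prop
  have a2 : Measurable fun z : ((ℝ × Rn N) × Rn N) × Rn N => (z.1.1.1, z.1.1.2) := by fun_prop
  have a3 : Measurable fun z : ((ℝ × Rn N) × Rn N) × Rn N => kk N Φ b z.1.1.2 z.1.2 z.2 :=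
    ((kk_meas hΦ hb).comp q :)
  have b1 : Measurable fun z : ((ℝ × Rn N) × Rn N) × Rn N => F z.1.1.1 z.1.2 := (hF.comp a1 :)
  have b2 : Measurable fun z : ((ℝ × Rn N) × Rn N) × Rn N => F z.1.1.1 z.1.1.2 := (hF.comp a2 :)
  have c : Measurable fun z : ((ℝ × Rn N) × Rn N) × Rn N => kk N Φ b z.1.1.2 z.1.2 z.2 *
      (F z.1.1.1 z.1.2 * F z.1.1.1 z.1.1.2) := a3.mul (b1.mul b2)
  have d : Measurable fun z : (ℝ × Rn N) × Rn N => ∫⁻ σ, kk N Φ b z.1.2 z.2 σ *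
      (F z.1.1 z.2 * F z.1.1 z.1.2) ∂(sphMeas N) :=
    c.lintegral_prod_right'
  exact d.lintegral_prod_right'

/-- If the time integral of a weighted density is finite, then it may be computed velocity by
velocity, and the time integral is finite at almost every velocity. -/
lemma ae_time_finite {N : ℕ} {G : ℝ → Rn N → ℝ≥0∞} (hG : Measurable (Function.uncurry G))
    {ψ : Rn N → ℝ≥0∞} (hψ : Measurable ψ) (hψ1 : ∀ v, 1 ≤ ψ v) {t : ℝ}
    (h : ∫⁻ τ in Set.Ioc 0 t, ∫⁻ v, G τ v * ψ v ≠ ⊤) :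
    (∫⁻ τ in Set.Ioc 0 t, ∫⁻ v, G τ v * ψ v = ∫⁻ v, (∫⁻ τ in Set.Ioc 0 t, G τ v) * ψ v) ∧
    ∀ᵐ v, ∫⁻ τ in Set.Ioc 0 t, G τ v < ⊤ := by
  have m1 : Measurable fun x : ℝ × Rn N => G x.1 x.2 * ψ x.2 := hG.mul (hψ.comp measurable_snd :)
  have m2 : Measurable fun x : Rn N × ℝ => G x.2 x.1 := (hG.comp measurable_swap :)
  have m3 : ∀ v : Rn N, Measurable fun τ => G τ v := fun v =>
    (m2.comp (measurable_prodMk_left (x := v)) :)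
  have m4 : Measurable fun v : Rn N => ∫⁻ τ in Set.Ioc 0 t, G τ v := m2.lintegral_prod_right'
  have e : ∫⁻ τ in Set.Ioc 0 t, ∫⁻ v, G τ v * ψ v =
      ∫⁻ v, (∫⁻ τ in Set.Ioc 0 t, G τ v) * ψ v := by
    rw [lintegral_lintegral_swap m1.aemeasurable]
    exact lintegral_congr fun v => lintegral_mul_const _ (m3 v)
  refine ⟨e, ?_⟩
  rw [e] at h
  have h1 := ae_lt_top (m4.mul hψ) h
  filter_upwards [h1] with v hv
  exact lt_of_le_of_lt (le_mul_of_one_le_right' (hψ1 v)) hv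

/-- The Duhamel formula tested against a weight. All terms are nonnegative and every exchange of
integrals is an instance of Tonelli's theorem. -/
lemma time_balance {N : ℕ} [IsFiniteMeasure (sphMeas N)] {Φ b : ℝ → ℝ} (hΦ : Measurable Φ)
    (hb : Measurable b) (hΦ0 : ∀ z : Rn N, 0 ≤ Φ ‖z‖) (hb0 : ∀ x, 0 ≤ b x)
    {f : ℝ → Rn N → ℝ} (hf : ∀ t v, 0 ≤ f t v) (hm : Measurable (Function.uncurry f)) {t : ℝ}
    (hQ : ∀ v, f t v = f 0 v + ∫ τ in Set.Ioc 0 t, Qop N Φ b (f τ) (f τ) v)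
    {ψ : Rn N → ℝ≥0∞} (hψ : Measurable ψ) (hψ1 : ∀ v, 1 ≤ ψ v)
    (hG : ∫⁻ τ in Set.Ioc 0 t, ∫⁻ v, gain N Φ b (fun x => ENNReal.ofReal (f τ x)) v * ψ v ≠ ⊤)
    (hL : ∫⁻ τ in Set.Ioc 0 t, ∫⁻ v, loss N Φ b (fun x => ENNReal.ofReal (f τ x)) v * ψ v ≠ ⊤) :
    (∫⁻ v, ENNReal.ofReal (f t v) * ψ v) +
      ∫⁻ τ in Set.Ioc 0 t, ∫⁻ v, loss N Φ b (fun x => ENNReal.ofReal (f τ x)) v * ψ v =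
    (∫⁻ v, ENNReal.ofReal (f 0 v) * ψ v) +
      ∫⁻ τ in Set.Ioc 0 t, ∫⁻ v, gain N Φ b (fun x => ENNReal.ofReal (f τ x)) v * ψ v := by
  have hft : ∀ τ, Measurable (f τ) := fun τ => hm.comp measurable_prodMk_left
  have mF : Measurable (Function.uncurry fun τ x => ENNReal.ofReal (f τ x)) := hm.ennreal_ofReal
  let G : ℝ → Rn N → ℝ≥0∞ := fun τ v => gain N Φ b (fun x => ENNReal.ofReal (f τ x)) v
  let L : ℝ → Rn N → ℝ≥0∞ := fun τ v => loss N Φ b (fun x => ENNReal.ofReal (f τ x)) v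
  have mG : Measurable (Function.uncurry G) := gain_meas hΦ hb mF
  have mL : Measurable (Function.uncurry L) := loss_meas hΦ hb mF
  obtain ⟨eG, fG⟩ := ae_time_finite mG hψ hψ1 hG
  obtain ⟨eL, fL⟩ := ae_time_finite mL hψ hψ1 hL
  have mG' : ∀ v : Rn N, Measurable fun τ => G τ v := fun v =>
    ((mG.comp measurable_swap).comp (measurable_prodMk_left (x := v)) :)
  have mL' : ∀ v : Rn N, Measurable fun τ => L τ v := fun v =>
    ((mL.comp measurable_swap).comp (measurable_prodMk_left (x := v)) :)
  have main : ∀ᵐ v : Rn N, ENNReal.ofReal (f t v) + ∫⁻ τ in Set.Ioc 0 t, L τ v =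
      ENNReal.ofReal (f 0 v) + ∫⁻ τ in Set.Ioc 0 t, G τ v := by
    filter_upwards [fG, fL] with v hGv hLv
    have aG := ae_lt_top (mG' v) hGv.ne
    have aL := ae_lt_top (mL' v) hLv.ne
    have e1 : ∫ τ in Set.Ioc 0 t, Qop N Φ b (f τ) (f τ) v =
        (∫⁻ τ in Set.Ioc 0 t, G τ v).toReal - (∫⁻ τ in Set.Ioc 0 t, L τ v).toReal := by
      rw [← integral_toReal (mG' v).aemeasurable aG, ← integral_toReal (mL' v).aemeasurable aL,
        ← integral_sub (integrable_toReal_of_lintegral_ne_top (mG' v).aemeasurable hGv.ne)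
          (integrable_toReal_of_lintegral_ne_top (mL' v).aemeasurable hLv.ne)]
      refine integral_congr_ae ?_
      filter_upwards [aG, aL] with τ h1 h2
      exact Qop_eq hΦ hb hΦ0 hb0 (hf τ) (hft τ) h1 h2
    have e2 := hQ v
    rw [e1] at e2
    have e3 : f t v + (∫⁻ τ in Set.Ioc 0 t, L τ v).toReal =
        f 0 v + (∫⁻ τ in Set.Ioc 0 t, G τ v).toReal := by linarith
    have e4 := congrArg ENNReal.ofReal e3
    rwa [ENNReal.ofReal_add (hf _ _) ENNReal.toReal_nonneg, ENNReal.ofReal_toReal hLv.ne,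
      ENNReal.ofReal_add (hf _ _) ENNReal.toReal_nonneg, ENNReal.ofReal_toReal hGv.ne] at e4
  change _ + ∫⁻ τ in Set.Ioc 0 t, ∫⁻ v, L τ v * ψ v =
    _ + ∫⁻ τ in Set.Ioc 0 t, ∫⁻ v, G τ v * ψ v
  have n1 : ∀ τ, Measurable fun v => ENNReal.ofReal (f τ v) * ψ v := fun τ =>
    (hft τ).ennreal_ofReal.mul hψ
  rw [eG, eL, ← lintegral_add_left (n1 t), ← lintegral_add_left (n1 0)]
  refine lintegral_congr_ae ?_
  filter_upwards [main] with v hv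
  rw [← add_mul, ← add_mul, hv]

/-! ### The moment inequality -/

lemma L1s_meas {N : ℕ} {f : ℝ → Rn N → ℝ} (hm : Measurable (Function.uncurry f)) (r : ℝ) :
    Measurable fun τ => L1s N r (f τ) := by
  have m0 : Measurable fun x : ℝ × Rn N => f x.1 x.2 := hm
  have m1 : Measurable fun x : ℝ × Rn N => (1 + ‖x.2‖ ^ 2) ^ (r / 2) :=
    (by fun_prop : Measurable fun x : ℝ × Rn N => 1 + ‖x.2‖ ^ 2).pow_const _
  have m2 : Measurable fun x : ℝ × Rn N =>
      ENNReal.ofReal (|f x.1 x.2| * (1 + ‖x.2‖ ^ 2) ^ (r / 2)) :=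
    ((_root_.continuous_abs.measurable.comp m0 :).mul m1).ennreal_ofReal
  exact m2.lintegral_prod_right'

lemma L1s_mono {N : ℕ} {f : Rn N → ℝ} (hf : ∀ v, 0 ≤ f v) {r s : ℝ} (h : r ≤ s) :
    L1s N r f ≤ L1s N s f := by
  rw [L1s_eq_mom hf rfl, L1s_eq_mom hf rfl]
  exact mom_mono _ (by linarith)

/-- Passage from an inequality between nonnegative moments and their time integrals to the
corresponding inequality between real integrals. -/
lemma to_real_ineq {X Y : ℝ → ℝ≥0∞} (hX : Measurable X) (hY : Measurable Y) {t₀ t M : ℝ}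
    (ht : t₀ ≤ t) (bX : ∀ τ ∈ Set.Ioc t₀ t, X τ ≤ ENNReal.ofReal M)
    (bY : ∀ τ ∈ Set.Ioc t₀ t, Y τ ≤ ENNReal.ofReal M) {m m₀ : ℝ≥0∞} (hm : m ≠ ⊤) (hm₀ : m₀ ≠ ⊤)
    {C K : ℝ} (hC : 0 < C) (hK : 0 < K)
    (h : m + ENNReal.ofReal K * ∫⁻ τ in Set.Ioc t₀ t, Y τ ≤
      m₀ + ENNReal.ofReal C * ∫⁻ τ in Set.Ioc t₀ t, X τ) :
    m.toReal ≤ m₀.toReal + ∫ τ in Set.Icc t₀ t, (1 + C * (X τ).toReal - K * (Y τ).toReal) := by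
  have fin : ∀ Z : ℝ → ℝ≥0∞, (∀ τ ∈ Set.Ioc t₀ t, Z τ ≤ ENNReal.ofReal M) →
      ∫⁻ τ in Set.Ioc t₀ t, Z τ ≠ ⊤ := fun Z hZ =>
    ((setLIntegral_mono measurable_const hZ).trans_lt (by
      rw [setLIntegral_const]
      exact ENNReal.mul_lt_top ENNReal.ofReal_lt_top (by simp))).ne
  have fX := fin X bX
  have fY := fin Y bY
  have iX : IntegrableOn (fun τ => (X τ).toReal) (Set.Ioc t₀ t) :=
    integrable_toReal_of_lintegral_ne_top hX.aemeasurable fX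
  have iY : IntegrableOn (fun τ => (Y τ).toReal) (Set.Ioc t₀ t) :=
    integrable_toReal_of_lintegral_ne_top hY.aemeasurable fY
  have i1 : IntegrableOn (fun _ : ℝ => (1 : ℝ)) (Set.Ioc t₀ t) := by simp
  have eX : ∫ τ in Set.Ioc t₀ t, (X τ).toReal = (∫⁻ τ in Set.Ioc t₀ t, X τ).toReal :=
    integral_toReal hX.aemeasurable (ae_lt_top hX fX)
  have eY : ∫ τ in Set.Ioc t₀ t, (Y τ).toReal = (∫⁻ τ in Set.Ioc t₀ t, Y τ).toReal :=
    integral_toReal hY.aemeasurable (ae_lt_top hY fY)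
  have e : ∫ τ in Set.Icc t₀ t, (1 + C * (X τ).toReal - K * (Y τ).toReal) =
      (t - t₀) + C * (∫⁻ τ in Set.Ioc t₀ t, X τ).toReal -
        K * (∫⁻ τ in Set.Ioc t₀ t, Y τ).toReal := by
    have j1 : IntegrableOn (fun τ => 1 + C * (X τ).toReal) (Set.Ioc t₀ t) :=
      i1.add (iX.const_mul C)
    rw [integral_Icc_eq_integral_Ioc, integral_sub j1 (iY.const_mul K),
      integral_add i1 (iX.const_mul C), integral_const_mul, integral_const_mul, eX, eY]
    simp [ht]
  have h2 := ENNReal.toReal_mono (ENNReal.add_ne_top.2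
    ⟨hm₀, ENNReal.mul_ne_top ENNReal.ofReal_ne_top fX⟩) h
  rw [ENNReal.toReal_add hm (ENNReal.mul_ne_top ENNReal.ofReal_ne_top fY),
    ENNReal.toReal_add hm₀ (ENNReal.mul_ne_top ENNReal.ofReal_ne_top fX), ENNReal.toReal_mul,
    ENNReal.toReal_mul, ENNReal.toReal_ofReal hC.le, ENNReal.toReal_ofReal hK.le] at h2
  rw [e]
  linarith

/-- **Moment differential inequality for soft potentials** (integrated form): for `s > 2`
there are constants `C₁, C₂, K₀ > 0` depending only on the dimension, the kernel, `s` and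
the mass `ρ` and energy `E` of the initial datum, such that
`‖f(t)‖_{L¹_s} ≤ ‖f(t₀)‖_{L¹_s}
   + ∫_{t₀}^t (C₁ + C₂ ‖f(τ)‖_{L¹_{s-2}} - K₀ ‖f(τ)‖_{L¹_{s+γ}}) dτ`. -/
theorem moment_differential_inequality
    (N : ℕ) (hN : 2 ≤ N) (s : ℝ) (hs : 2 < s)
    (Φ b : ℝ → ℝ) (γ : ℝ) (hK : KernelOK N Φ b γ) (ρ E : ℝ) :
    ∃ C₁ C₂ K₀ : ℝ, 0 < C₁ ∧ 0 < C₂ ∧ 0 < K₀ ∧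
      ∀ (fIn : Rn N → ℝ) (f : ℝ → Rn N → ℝ),
        (∀ v, 0 ≤ fIn v) → L1s N s fIn < ⊤ →
        (∫ v : Rn N, fIn v) = ρ → (∫ v : Rn N, fIn v * ‖v‖ ^ 2) = E →
        IsSolution N Φ b f fIn →
        (∀ T : ℝ, 0 ≤ T → ∃ M : ℝ, ∀ t ∈ Set.Icc (0:ℝ) T,
          L1s N s (f t) ≤ ENNReal.ofReal M) →
        ∀ t₀ t : ℝ, 0 ≤ t₀ → t₀ ≤ t →
          (L1s N s (f t)).toReal ≤ (L1s N s (f t₀)).toReal +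
            ∫ τ in Set.Icc t₀ t,
              (C₁ + C₂ * (L1s N (s - 2) (f τ)).toReal
                - K₀ * (L1s N (s + γ) (f τ)).toReal) := by
  have hnt : Nontrivial (Rn N) := by
    have : Nonempty (Fin N) := ⟨⟨0, by omega⟩⟩
    infer_instance
  have hfs := sph_finite hN hK
  obtain ⟨b', hb', ⟨b₀, hb₀, hbl⟩, hbb, B, hB0, hB⟩ := exists_borel_kernel hN hK
  obtain ⟨C₂, K₀, C₃, hC₂, hK₀, hfix⟩ := fixed_time hN hs hK ρ E hb' hb₀ hbl hB0 hB
  refine ⟨1, C₂, K₀, one_pos, hC₂, hK₀, fun fIn f _ _ hρ hE sol hloc t₀ t ht₀ ht => ?_⟩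
  have hγ' := hK.gamma_mem.2
  have hΦ : Measurable Φ := hK.phi_smooth.continuous.measurable
  obtain ⟨cΦ, CΦ, hcΦ, -, hbd⟩ := hK.phi_bounds
  have hΦ0 : ∀ z : Rn N, 0 ≤ Φ ‖z‖ := fun z =>
    le_trans (by have := norm_nonneg z; positivity) (hbd z).1
  have hb0 : ∀ x, 0 ≤ b' x := fun x => hb₀.le.trans (hbl x)
  have hft : ∀ τ, Measurable (f τ) := fun τ => sol.meas.comp measurable_prodMk_left
  have mF : Measurable (Function.uncurry fun τ x => ENNReal.ofReal (f τ x)) :=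
    sol.meas.ennreal_ofReal
  have hf0 : f 0 = fIn := by
    funext v
    have := sol.eqn 0 le_rfl v
    simpa using this
  have hψ := br_rpow_meas (N := N) (s / 2)
  have hψ1 : ∀ v : Rn N, 1 ≤ ENNReal.ofReal (br v ^ (s / 2)) := fun v => by
    rw [← ENNReal.ofReal_one]
    exact ENNReal.ofReal_le_ofReal (Real.one_le_rpow (one_le_br v) (by linarith))
  set A : ℝ → ℝ≥0∞ := fun τ => ∫⁻ v : Rn N,
    gain N Φ b' (fun x => ENNReal.ofReal (f τ x)) v * ENNReal.ofReal (br v ^ (s / 2)) with hA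
  set D : ℝ → ℝ≥0∞ := fun τ => ∫⁻ v : Rn N,
    loss N Φ b' (fun x => ENNReal.ofReal (f τ x)) v * ENNReal.ofReal (br v ^ (s / 2)) with hD
  have mA : Measurable A :=
    ((gain_meas hΦ hb' mF).mul (hψ.comp measurable_snd :)).lintegral_prod_right'
  have mD : Measurable D :=
    ((loss_meas hΦ hb' mF).mul (hψ.comp measurable_snd :)).lintegral_prod_right'
  have hx : ∀ τ, 0 ≤ τ → A τ + ENNReal.ofReal K₀ * L1s N (s + γ) (f τ) ≤
      D τ + ENNReal.ofReal C₂ * L1s N (s - 2) (f τ) ∧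
      D τ ≤ ENNReal.ofReal C₃ * (L1s N s (f τ) * L1s N s (f τ)) := fun τ hτ =>
    hfix (f τ) (sol.nonneg τ) (hft τ) (sol.mem_L1_2 τ hτ) ((sol.mass τ hτ).trans hρ)
      ((sol.energy τ hτ).trans hE)
  obtain ⟨M, hM⟩ := hloc t (ht₀.trans ht)
  -- Finiteness of gain and loss on `[0, t]` comes from the local bound on the moment of order `s`.
  set Dm := ENNReal.ofReal C₃ * (ENNReal.ofReal M * ENNReal.ofReal M) with hDm
  set Am := Dm + ENNReal.ofReal C₂ * ENNReal.ofReal M with hAm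
  have bD : ∀ τ ∈ Set.Icc 0 t, D τ ≤ Dm := fun τ hτ =>
    (hx τ hτ.1).2.trans (mul_le_mul_right (mul_le_mul' (hM τ hτ) (hM τ hτ)) _)
  have bA : ∀ τ ∈ Set.Icc 0 t, A τ ≤ Am := fun τ hτ => by
    refine (le_self_add.trans (hx τ hτ.1).1).trans (add_le_add (bD τ hτ) ?_)
    exact mul_le_mul_right ((L1s_mono (sol.nonneg τ) (by linarith)).trans (hM τ hτ)) _
  have hDm' : Dm < ⊤ := by simp [hDm, ENNReal.mul_lt_top]
  have hAm' : Am < ⊤ := by simp [hAm, hDm', ENNReal.mul_lt_top]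
  have fin : ∀ (Z : ℝ → ℝ≥0∞) (c : ℝ≥0∞), c < ⊤ → (∀ τ ∈ Set.Icc 0 t, Z τ ≤ c) →
      ∀ x y : ℝ, 0 ≤ x → y ≤ t → ∫⁻ τ in Set.Ioc x y, Z τ ≠ ⊤ := by
    intro Z c hc hZ x y h0 hy
    refine ((setLIntegral_mono measurable_const fun τ hτ =>
      hZ τ ⟨h0.trans hτ.1.le, hτ.2.trans hy⟩).trans_lt ?_).ne
    rw [setLIntegral_const]
    exact ENNReal.mul_lt_top hc (by simp)
  have balance : ∀ r, 0 ≤ r → r ≤ t →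
      L1s N s (f r) + ∫⁻ τ in Set.Ioc 0 r, D τ = L1s N s (f 0) + ∫⁻ τ in Set.Ioc 0 r, A τ := by
    intro r hr hrt
    rw [L1s_eq_mom (sol.nonneg r) rfl, L1s_eq_mom (sol.nonneg 0) rfl]
    refine time_balance hΦ hb' hΦ0 hb0 sol.nonneg sol.meas (fun v => ?_) hψ hψ1
      (fin A Am hAm' bA 0 r le_rfl hrt) (fin D Dm hDm' bD 0 r le_rfl hrt)
    rw [sol.eqn r hr v, hf0]
    congr 1
    exact integral_congr_ae (ae_of_all _ fun τ => Qop_congr hbb (f τ) (f τ) v)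
  have split : ∀ Z : ℝ → ℝ≥0∞, ∫⁻ τ in Set.Ioc 0 t, Z τ =
      (∫⁻ τ in Set.Ioc 0 t₀, Z τ) + ∫⁻ τ in Set.Ioc t₀ t, Z τ := fun Z => by
    rw [← Set.Ioc_union_Ioc_eq_Ioc ht₀ ht, lintegral_union measurableSet_Ioc]
    exact Set.Ioc_disjoint_Ioc_of_le le_rfl
  have fD1 := fin D Dm hDm' bD 0 t₀ le_rfl ht
  have fD2 := fin D Dm hDm' bD t₀ t ht₀ le_rfl
  have step : L1s N s (f t) + ∫⁻ τ in Set.Ioc t₀ t, D τ =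
      L1s N s (f t₀) + ∫⁻ τ in Set.Ioc t₀ t, A τ := by
    have h1 := balance t (ht₀.trans ht) le_rfl
    have h2 := balance t₀ ht₀ ht
    rw [split, split, ← add_assoc (L1s N s (f 0)), ← h2] at h1
    refine (ENNReal.add_right_inj fD1).1 ?_
    rw [← add_assoc, ← add_assoc, add_comm _ (L1s N s (f t)), add_assoc, h1,
      add_comm _ (L1s N s (f t₀))]
  have mX := L1s_meas sol.meas (s - 2)
  have mY := L1s_meas sol.meas (s + γ)
  have ineq : (∫⁻ τ in Set.Ioc t₀ t, A τ) +
        ENNReal.ofReal K₀ * ∫⁻ τ in Set.Ioc t₀ t, L1s N (s + γ) (f τ) ≤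
      (∫⁻ τ in Set.Ioc t₀ t, D τ) +
        ENNReal.ofReal C₂ * ∫⁻ τ in Set.Ioc t₀ t, L1s N (s - 2) (f τ) := by
    rw [← lintegral_const_mul _ mX, ← lintegral_const_mul _ mY, ← lintegral_add_left mA,
      ← lintegral_add_left mD]
    exact setLIntegral_mono (mD.add (mX.const_mul _)) fun τ hτ =>
      (hx τ (ht₀.trans hτ.1.le)).1
  have htt : t ∈ Set.Icc 0 t := ⟨ht₀.trans ht, le_rfl⟩
  refine to_real_ineq mX mY ht
    (fun τ hτ => (L1s_mono (sol.nonneg τ) (by linarith)).trans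
      (hM τ ⟨ht₀.trans hτ.1.le, hτ.2⟩))
    (fun τ hτ => (L1s_mono (sol.nonneg τ) (by linarith)).trans
      (hM τ ⟨ht₀.trans hτ.1.le, hτ.2⟩))
    ((hM t htt).trans_lt ENNReal.ofReal_lt_top).ne
    ((hM t₀ ⟨ht₀, ht⟩).trans_lt ENNReal.ofReal_lt_top).ne hC₂ hK₀ ?_
  -- The time integral of the loss is finite, so it may be added to both sides and cancelled.
  refine (ENNReal.add_le_add_iff_left fD2).1 ?_
  calc _ = (L1s N s (f t) + ∫⁻ τ in Set.Ioc t₀ t, D τ) +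
        ENNReal.ofReal K₀ * ∫⁻ τ in Set.Ioc t₀ t, L1s N (s + γ) (f τ) := by ring
    _ = L1s N s (f t₀) + ((∫⁻ τ in Set.Ioc t₀ t, A τ) +
        ENNReal.ofReal K₀ * ∫⁻ τ in Set.Ioc t₀ t, L1s N (s + γ) (f τ)) := by rw [step, add_assoc]
    _ ≤ L1s N s (f t₀) + ((∫⁻ τ in Set.Ioc t₀ t, D τ) +
        ENNReal.ofReal C₂ * ∫⁻ τ in Set.Ioc t₀ t, L1s N (s - 2) (f τ)) := by gcongr
    _ = _ := by ring
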